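/- Let φ satisfy: φ : ℝ → [0,∞) continuous, C² on (0,∞), φ = 0 on (−∞,0], φ > 0 on (0,∞), φ' > 0 on (0,∞), φ(η) ≥ Cη^k near 0 for some 0 < k < 3/2, and the normalization 4π ∫₀¹ φ(η)(1−η)³ dη = 1. For κ > 0 let (f_κ, λ_κ, μ_κ) be the induced Einstein–Vlasov steady state with central redshift κ. Then there exists κ₀ > 0 such that for all κ > κ₀ there exists a spherically symmetric function h ∈ C²(ℝ⁶), odd in v, such that the second variation of the energy–Casimir functional is negative in the direction of the linearly dynamically accessible perturbation generated by h: A(f_h, f_h) < 0. -/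

import Mathlib

/-!
The unstable direction is generated by `h = a(|x|) x·v` with `a(r) = r^{-3/2} e^{-3y(r)/2} χ(r)`,
where `χ` is a cutoff in `log r` to a layer `r₁ ≤ r ≤ r₁ e^L` (`hT`, `aT`, `chi`). For large `κ`
the matter in this layer is almost ultrarelativistic, `ρ ≈ 3p ≈ e^{4y}`, and the steady state
there is almost invariant under the scaling `r ↦ cr`, `e^{-2y} ↦ c e^{-2y}`; the weight in `a` is
the scale invariant one. Layers may therefore be taken long on the logarithmic scale, and it
suffices to show that the quadratic form has a uniformly negative density with respect to `d(log
r)`, up to boundary effects of the cutoff.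

For such `h` one finds `λ_h = -a S e^λ` with an explicit factor `S` (`lamh_formula`), and `f_h` is
`φ'(E)/⟨v⟩` times an explicit polynomial in `|v|` and in the cosine of the angle between `x` and
`v` (`fh_formula`). Splitting off the terms of lower order in `|v|` by Young's inequality and
inserting the spherical averages `1/3` of `cos²` and `1/5` of `cos⁴` bounds the second variation
by a radial integral of `W1 - W2` (`Aform_le`).

In terms of the scale invariant variables `n = m/r` and `q = 4πr²e^{4y}`, adding the derivative of
`V χ²` with `V = -log q + 7n/2`, whose integral vanishes, to the integrand turns the coefficient
of `χ²` into a function `Phi` of `(n, q)`, of the splitting parameter and of the deviations from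
the ultrarelativistic limit (`W_le`). In the limit, `Phi ≤ -1/1000` on the compact region `0 ≤ n ≤
71/250`, `0 ≤ q ≤ 3n - 25n³ + 1/200` (`Phi_lim`), and by compactness a negative bound persists
under small deviations (`Phi_tube`).

The solution stays in that region: with a small `e > 0`, the bound `q ≤ (3+4e)n - 25n³` holds near
the centre and cannot be violated later, which also forces `n ≤ 71/250` (`barrier1`); moreover `q`
stays above a positive constant from `r₁` on (`barrier3`), so that `V` is bounded. As then `-r y'
≤ 1`, the redshift `y` decreases by at most `2L + 1` between the centre and the end of the layer,
and all deviations are small throughout the layer once `κ` is large compared to `L` (`layer`).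

The terms with `(r χ')²` contribute at most a constant times `1/L`, the negative coefficient gains
a multiple of `L` (`radial_neg`). First `L` is fixed so that the gain dominates, then `κ₀` is
chosen in dependence on `L` (`core`).
-/

open MeasureTheory Set Filter Topology
open scoped ENNReal RealInnerProductSpace

noncomputable section

/-- Position/momentum space `ℝ³`. -/
abbrev V3 : Type := EuclideanSpace ℝ (Fin 3)

/-- A rotation: a linear isometry of `ℝ³` with determinant `1` (an element of SO(3)). -/
def IsRot (A : V3 ≃ₗᵢ[ℝ] V3) : Prop :=
  LinearMap.det (A.toLinearEquiv : V3 →ₗ[ℝ] V3) = 1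

/-- Spherical symmetry of a phase-space function. -/
def SphSym (h : V3 × V3 → ℝ) : Prop :=
  ∀ A : V3 ≃ₗᵢ[ℝ] V3, IsRot A → ∀ x v : V3, h (A x, A v) = h (x, v)

/-- The Poisson bracket `{g,h} = ∂_x g · ∂_v h − ∂_v g · ∂_x h`. -/
def pbracket (g h : V3 × V3 → ℝ) (z : V3 × V3) : ℝ :=
  ⟪gradient (fun x => g (x, z.2)) z.1, gradient (fun v => h (z.1, v)) z.2⟫
  - ⟪gradient (fun v => g (z.1, v)) z.2, gradient (fun x => h (x, z.2)) z.1⟫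

/-- `⟨v⟩ = √(1+|v|²)`. -/
def jap (v : V3) : ℝ := Real.sqrt (1 + ‖v‖ ^ 2)

/-- `w = x·v/r`. -/
def wfun (z : V3 × V3) : ℝ := ⟪z.1, z.2⟫ / ‖z.1‖

/-- The unit vector `e₁ ∈ ℝ³`. -/
def e1 : V3 := EuclideanSpace.single (0 : Fin 3) (1 : ℝ)

/-- Einstein–Vlasov density profile `g`. -/
def gEV (φ : ℝ → ℝ) (y : ℝ) : ℝ :=
  if 0 < y then 4 * Real.pi * Real.exp (4 * y) *
    ∫ η in (0 : ℝ)..(1 - Real.exp (-y)),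
      φ η * (1 - η) ^ 2 * Real.sqrt ((1 - η) ^ 2 - Real.exp (-2 * y))
  else 0

/-- Einstein–Vlasov pressure profile `h`. -/
def hEV (φ : ℝ → ℝ) (y : ℝ) : ℝ :=
  if 0 < y then 4 * Real.pi / 3 * Real.exp (4 * y) *
    ∫ η in (0 : ℝ)..(1 - Real.exp (-y)),
      φ η * ((1 - η) ^ 2 - Real.exp (-2 * y)) ^ ((3 : ℝ) / 2)
  else 0

/-- The mass function `m(r) = 4π ∫₀^r g(y(s)) s² ds`. -/
def mEV (φ : ℝ → ℝ) (y : ℝ → ℝ) (r : ℝ) : ℝ :=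
  4 * Real.pi * ∫ s in (0 : ℝ)..r, gEV φ (y s) * s ^ 2

/-- `y` solves the stationary Einstein–Vlasov equation with `y(0) = κ`. -/
def IsEVSteady (φ : ℝ → ℝ) (κ : ℝ) (y : ℝ → ℝ) : Prop :=
  ContDiffOn ℝ 2 y (Ici 0) ∧ y 0 = κ ∧
  ∀ r : ℝ, 0 < r → 2 * mEV φ y r < r ∧
    deriv y r = -(1 - 2 * mEV φ y r / r)⁻¹ *
      (mEV φ y r / r ^ 2 + 4 * Real.pi * r * hEV φ (y r))

/-- The particle energy `E(x,v) = e^{μ(r)}⟨v⟩`. -/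
def Epart (μf : ℝ → ℝ) (z : V3 × V3) : ℝ := Real.exp (μf ‖z.1‖) * jap z.2

/-- `φ'(E)`, the derivative of `E ↦ φ(1 − E/E₀)`. -/
def phiE (φ : ℝ → ℝ) (E0 e : ℝ) : ℝ := deriv (fun s => φ (1 - s / E0)) e

/-- `λ_h(x) = 4π r e^{μ+λ} ∫ φ'(E) h(x,v) w dv` with `r = |x|`. -/
def lamh (μf lamf : ℝ → ℝ) (E0 : ℝ) (φ : ℝ → ℝ) (h : V3 × V3 → ℝ) (x : V3) : ℝ :=
  4 * Real.pi * ‖x‖ * Real.exp (μf ‖x‖ + lamf ‖x‖) *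
    ∫ v : V3, phiE φ E0 (Epart μf (x, v)) * h (x, v) * wfun (x, v)

/-- The linearly dynamically accessible perturbation
`f_h = φ'(E)(e^{−λ}{h,E} + e^{μ} λ_h w²/⟨v⟩)` generated by `h`. -/
def fh (μf lamf : ℝ → ℝ) (E0 : ℝ) (φ : ℝ → ℝ) (h : V3 × V3 → ℝ) (z : V3 × V3) : ℝ :=
  phiE φ E0 (Epart μf z) *
    (Real.exp (-(lamf ‖z.1‖)) * pbracket h (Epart μf) z +
      Real.exp (μf ‖z.1‖) * lamh μf lamf E0 φ h z.1 * (wfun z) ^ 2 / jap z.2)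

/-- The second variation of the energy–Casimir functional,
`A(δf,δf) = (1/2)∬ e^{λ} δf²/|φ'(E)| dv dx − (1/2)∫₀^∞ e^{μ−λ}(2rμ'+1) δλ² dr`. -/
def Aform (μf lamf : ℝ → ℝ) (E0 : ℝ) (φ : ℝ → ℝ) (δf : V3 × V3 → ℝ) (dl : ℝ → ℝ) : ℝ :=
  (1 / 2) * (∫ z : V3 × V3,
      Real.exp (lamf ‖z.1‖) * (δf z) ^ 2 / |phiE φ E0 (Epart μf z)|) -
    (1 / 2) * ∫ r in Ioi (0 : ℝ),
      Real.exp (μf r - lamf r) * (2 * r * deriv μf r + 1) * (dl r) ^ 2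

/-! ### The equation of state and radial integrals -/

/-- The hypotheses on the microscopic equation of state `φ` that the argument needs. -/
structure Prof (φ : ℝ → ℝ) : Prop where
  cont : Continuous φ
  c2 : ContDiffOn ℝ 2 φ (Ioi 0)
  zero : ∀ η : ℝ, η ≤ 0 → φ η = 0
  pos : ∀ η : ℝ, 0 < η → 0 < φ η
  dpos : ∀ η : ℝ, 0 < η → 0 < deriv φ η
  norm : 4 * Real.pi * ∫ η in (0 : ℝ)..1, φ η * (1 - η) ^ 3 = 1

namespace Prof
variable {φ : ℝ → ℝ}

lemma nonneg (h : Prof φ) (η : ℝ) : 0 ≤ φ η := by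
  rcases le_or_gt η 0 with h0 | h0
  · exact (h.zero η h0).ge
  · exact (h.pos η h0).le

/-- At `η ≤ 0` the derivative vanishes: `η` is a minimum of `φ` (with the junk value `0` for the
derivative at `η = 0` should `φ` fail to be differentiable there). -/
lemma d_zero (h : Prof φ) {η : ℝ} (hη : η ≤ 0) : deriv φ η = 0 := by
  have : IsLocalMin φ η := by
    apply Filter.Eventually.of_forall
    intro x
    rw [h.zero η hη]
    exact h.nonneg x
  exact this.deriv_eq_zero

lemma d_nonneg (h : Prof φ) (η : ℝ) : 0 ≤ deriv φ η := by
  rcases le_or_gt η 0 with h0 | h0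
  · exact (h.d_zero h0).ge
  · exact (h.dpos η h0).le

lemma diff (h : Prof φ) {η : ℝ} (hη : 0 < η) : HasDerivAt φ (deriv φ η) η := by
  have : DifferentiableAt ℝ φ η :=
    (h.c2.differentiableOn (by norm_num)).differentiableAt (Ioi_mem_nhds hη)
  exact this.hasDerivAt

lemma d_integrable (h : Prof φ) (a : ℝ) : IntervalIntegrable (deriv φ) volume 0 a := by
  rcases le_total 0 a with ha | ha
  · refine intervalIntegral.intervalIntegrable_deriv_of_nonneg h.cont.continuousOn ?_ ?_
    · intro x hx
      rw [min_eq_left ha] at hx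
      exact h.diff hx.1
    · intro x hx
      exact h.d_nonneg x
  · have : EqOn (fun _ => (0:ℝ)) (deriv φ) (uIoc 0 a) := by
      intro x hx
      rw [uIoc_of_ge ha] at hx
      exact (h.d_zero hx.2).symm
    exact (intervalIntegrable_const (c := (0:ℝ))).congr this

/-- Integration by parts against a polynomial weight vanishing at `1`. -/
lemma d_pow (h : Prof φ) (n : ℕ) :
    ∫ η in (0:ℝ)..1, deriv φ η * (1 - η) ^ (n + 1)
      = (n + 1) * ∫ η in (0:ℝ)..1, φ η * (1 - η) ^ n := by
  have key := intervalIntegral.integral_mul_deriv_eq_deriv_mul_of_hasDeriv_right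
    (a := (0:ℝ)) (b := 1) (u := fun η : ℝ => (1 - η) ^ (n+1)) (v := φ)
    (u' := fun η => -((n+1) * (1 - η) ^ n)) (v' := deriv φ)
    (by fun_prop) (h.cont.continuousOn)
    (by
      intro x hx
      have h1 : HasDerivAt (fun η : ℝ => (1 - η) ^ (n+1)) (-((n+1) * (1 - x) ^ n)) x := by
        refine HasDerivAt.congr_deriv
          (((hasDerivAt_id x).const_sub 1).pow (n+1) : HasDerivAt (fun η : ℝ => (1 - η) ^ (n+1)) _ x) ?_
        simp
      exact h1.hasDerivWithinAt)
    (by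
      intro x hx
      simp only [min_eq_left (zero_le_one' ℝ)] at hx
      exact (h.diff hx.1).hasDerivWithinAt)
    ((by fun_prop : Continuous (fun η : ℝ => -((n+1) * (1 - η) ^ n))).intervalIntegrable _ _)
    (h.d_integrable 1)
  have h0 : φ 0 = 0 := h.zero 0 le_rfl
  simp only [sub_self, ne_eq, Nat.add_eq_zero_iff, one_ne_zero, and_false, not_false_eq_true,
    zero_pow, zero_mul, sub_zero, h0, mul_zero, zero_sub] at key
  rw [show (fun η : ℝ => deriv φ η * (1 - η) ^ (n+1)) = fun η => (1-η)^(n+1) * deriv φ η from by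
    ext; ring, key, ← intervalIntegral.integral_neg, ← intervalIntegral.integral_const_mul]
  congr 1; ext η; ring

lemma d_int_one (h : Prof φ) : ∫ η in (0:ℝ)..1, deriv φ η = φ 1 := by
  have := intervalIntegral.integral_eq_sub_of_hasDerivAt_of_le (zero_le_one' ℝ)
    h.cont.continuousOn (fun x hx => h.diff hx.1) (h.d_integrable 1)
  rw [this, h.zero 0 le_rfl, sub_zero]

end Prof

/-- Polar coordinates in velocity space. -/
lemma integral_radial (f : ℝ → ℝ) : ∫ v : V3, f ‖v‖ = 4 * Real.pi * ∫ s in Ioi (0:ℝ), s ^ 2 * f s := by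
  have := integral_fun_norm_addHaar (volume : Measure V3) f
  rw [this]
  have hb : (volume : Measure V3).real (Metric.ball 0 1) = Real.pi * 4 / 3 := by
    simp [Measure.real, EuclideanSpace.volume_ball_fin_three]
    positivity
  simp only [nsmul_eq_mul, smul_eq_mul, hb, finrank_euclideanSpace, Fintype.card_fin]
  norm_num
  ring_nf

lemma integrable_radial (f : ℝ → ℝ) :
    Integrable (fun v : V3 => f ‖v‖) ↔ IntegrableOn (fun s => s ^ 2 * f s) (Ioi (0:ℝ)) := by
  have := integrable_fun_norm_addHaar (volume : Measure V3) (f := f)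
  simpa using this

/-! ### Change of variables to the microscopic energy -/

/-- `√((1-η)² - e^{-2y})`, which by the junk value of `Real.sqrt` vanishes for
`1 - e^{-y} ≤ η ≤ 1`. -/
def Tf (y η : ℝ) : ℝ := Real.sqrt ((1 - η) ^ 2 - Real.exp (-2 * y))

lemma Tf_nonneg (y η : ℝ) : 0 ≤ Tf y η := Real.sqrt_nonneg _

lemma exp_neg_two (y : ℝ) : Real.exp (-2 * y) = Real.exp (-y) ^ 2 := by
  rw [← Real.exp_nat_mul]; congr 1; push_cast; ring

lemma Tf_le {y η : ℝ} (h : η ≤ 1) : Tf y η ≤ 1 - η := by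
  unfold Tf
  apply Real.sqrt_le_iff.2
  exact ⟨by linarith, by linarith [Real.exp_pos (-2*y)]⟩

lemma Tf_zero {y η : ℝ} (h : η ≤ 1) (h' : 1 - Real.exp (-y) ≤ η) : Tf y η = 0 := by
  unfold Tf
  apply Real.sqrt_eq_zero_of_nonpos
  rw [exp_neg_two]
  nlinarith [Real.exp_pos (-y)]

lemma Tf_sq {y η : ℝ} (h' : η ≤ 1 - Real.exp (-y)) : Tf y η ^ 2 = (1 - η) ^ 2 - Real.exp (-2 * y) := by
  unfold Tf
  rw [Real.sq_sqrt]
  rw [exp_neg_two]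
  nlinarith [Real.exp_pos (-y)]

lemma Tf_pos {y η : ℝ} (h' : η < 1 - Real.exp (-y)) : 0 < Tf y η := by
  unfold Tf
  apply Real.sqrt_pos.2
  rw [exp_neg_two]
  nlinarith [Real.exp_pos (-y)]

lemma Tf_ge {y η : ℝ} : (1 - η) - Real.exp (-y) ≤ Tf y η := by
  rcases le_or_gt ((1 - η) - Real.exp (-y)) 0 with h | h
  · exact h.trans (Tf_nonneg _ _)
  · unfold Tf
    apply Real.le_sqrt_of_sq_le
    rw [exp_neg_two]
    nlinarith [Real.exp_pos (-y)]

lemma Tf_cont (η : ℝ) : Continuous fun y => Tf y η := by unfold Tf; fun_prop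
lemma Tf_cont' (y : ℝ) : Continuous fun η => Tf y η := by unfold Tf; fun_prop

section cov
variable {φ : ℝ → ℝ} {y : ℝ}

lemma image_F : (fun η => Real.exp y * Tf y η) '' Ioo 0 (1 - Real.exp (-y))
    = {s : ℝ | 0 < s ∧ 0 < 1 - Real.exp (-y) * Real.sqrt (1 + s ^ 2)} := by
  have he : Real.exp (-y) * Real.exp y = 1 := by rw [← Real.exp_add]; simp
  ext s
  simp only [mem_image, mem_Ioo, mem_ofPred_eq]
  constructor
  · rintro ⟨η, ⟨h0, h1⟩, rfl⟩
    refine ⟨mul_pos (Real.exp_pos _) (Tf_pos h1), ?_⟩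
    have : Real.sqrt (1 + (Real.exp y * Tf y η) ^ 2) = Real.exp y * (1 - η) := by
      rw [Real.sqrt_eq_iff_mul_self_eq (by positivity)]
      · rw [mul_pow, Tf_sq h1.le, exp_neg_two]
        linear_combination (-(Real.exp (-y) * Real.exp y + 1)) * he
      · have := Real.exp_pos y; have := Real.exp_pos (-y); apply mul_nonneg <;> linarith
    rw [this, ← mul_assoc, he]; linarith
  · rintro ⟨h0, h1⟩
    refine ⟨1 - Real.exp (-y) * Real.sqrt (1 + s ^ 2), ⟨h1, ?_⟩, ?_⟩
    · have : 1 < Real.sqrt (1 + s^2) := by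
        apply Real.lt_sqrt_of_sq_lt; nlinarith
      nlinarith [Real.exp_pos (-y)]
    · unfold Tf
      rw [sub_sub_cancel, mul_pow, Real.sq_sqrt (by positivity), exp_neg_two]
      rw [show Real.exp (-y) ^ 2 * (1 + s ^ 2) - Real.exp (-y)^2 = (Real.exp (-y) * s)^2 by ring,
        Real.sqrt_sq (by positivity)]
      linear_combination s * he

lemma sqrt_F {η : ℝ} (h1 : η < 1 - Real.exp (-y)) :
    1 - Real.exp (-y) * Real.sqrt (1 + (Real.exp y * Tf y η) ^ 2) = η := by
  have he : Real.exp (-y) * Real.exp y = 1 := by rw [← Real.exp_add]; simp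
  have : Real.sqrt (1 + (Real.exp y * Tf y η) ^ 2) = Real.exp y * (1 - η) := by
    rw [Real.sqrt_eq_iff_mul_self_eq (by positivity)]
    · rw [mul_pow, Tf_sq h1.le, exp_neg_two]
      linear_combination (-(Real.exp (-y) * Real.exp y + 1)) * he
    · have := Real.exp_pos y; have := Real.exp_pos (-y); apply mul_nonneg <;> linarith
  rw [this, ← mul_assoc, he]; linarith

lemma hasDeriv_F {η : ℝ} (h1 : η < 1 - Real.exp (-y)) :
    HasDerivAt (fun η => Real.exp y * Tf y η) (- (Real.exp y * (1 - η) / Tf y η)) η := by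
  have hp := Tf_pos h1
  unfold Tf at hp ⊢
  have h2 : HasDerivAt (fun η : ℝ => (1 - η) ^ 2 - Real.exp (-2 * y)) (-(2 * (1 - η))) η := by
    refine HasDerivAt.congr_deriv ((((hasDerivAt_id η).const_sub 1).pow 2).sub_const
      (Real.exp (-2 * y)) : HasDerivAt (fun η : ℝ => (1 - η) ^ 2 - Real.exp (-2 * y)) _ η) ?_
    simp
  have h3 := (h2.sqrt (Real.sqrt_pos.1 hp).ne').const_mul (Real.exp y)
  refine h3.congr_deriv ?_
  have := hp.ne'
  field_simp

/-- Passing from the speed `s = |v|` to the microscopic energy variable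
`η = 1 - e^{-y}√(1+s²)`. -/
lemma cov (h : Prof φ) (j : ℕ) :
    (IntegrableOn (fun s => s ^ 2 * (deriv φ (1 - Real.exp (-y) * Real.sqrt (1 + s ^ 2)) * s ^ j))
        (Ioi (0:ℝ)) ↔
      IntegrableOn (fun η => deriv φ η * (1 - η) * Tf y η ^ (j + 1)) (Ioo 0 1)) ∧
    ∫ s in Ioi (0:ℝ), s ^ 2 * (deriv φ (1 - Real.exp (-y) * Real.sqrt (1 + s ^ 2)) * s ^ j)
      = Real.exp y ^ (j + 3) * ∫ η in Ioo (0:ℝ) 1, deriv φ η * (1 - η) * Tf y η ^ (j + 1) := by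
  set G : ℝ → ℝ := fun s => s ^ 2 * (deriv φ (1 - Real.exp (-y) * Real.sqrt (1 + s ^ 2)) * s ^ j)
  set H : ℝ → ℝ := fun η => deriv φ η * (1 - η) * Tf y η ^ (j + 1)
  set S := {s : ℝ | 0 < s ∧ 0 < 1 - Real.exp (-y) * Real.sqrt (1 + s ^ 2)}
  set A := Ioo 0 (1 - Real.exp (-y))
  have hey := Real.exp_pos y
  have hey' := Real.exp_pos (-y)
  have hSm : MeasurableSet S := by
    apply IsOpen.measurableSet
    exact (isOpen_lt (f := fun _ : ℝ => (0:ℝ)) (g := fun s => s) (by fun_prop) (by fun_prop)).inter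
      (isOpen_lt (f := fun _ : ℝ => (0:ℝ)) (g := fun s => 1 - Real.exp (-y) * Real.sqrt (1 + s ^ 2))
        (by fun_prop) (by fun_prop))
  have hS : ∀ s ∈ Ioi (0:ℝ) \ S, G s = 0 := by
    rintro s ⟨hs, hs'⟩
    simp only [S, mem_ofPred_eq, not_and, not_lt] at hs'
    simp only [G, h.d_zero (hs' hs)]; ring
  have hSs : S ⊆ Ioi 0 := fun s hs => hs.1
  have hAs : A ⊆ Ioo 0 1 := Ioo_subset_Ioo_right (by linarith)
  have hA : ∀ s ∈ Ioo (0:ℝ) 1 \ A, H s = 0 := by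
    rintro s ⟨hs, hs'⟩
    simp only [A, mem_Ioo, not_and, not_lt] at hs'
    simp only [H, Tf_zero hs.2.le (hs' hs.1)]; simp
  have hinj : InjOn (fun η => Real.exp y * Tf y η) A := by
    intro a ha b hb hab
    have := sqrt_F ha.2
    have h2 := sqrt_F hb.2
    simp only at hab
    rw [← this, hab, h2]
  have hder : ∀ η ∈ A, HasDerivWithinAt (fun η => Real.exp y * Tf y η)
      (- (Real.exp y * (1 - η) / Tf y η)) A η := fun η hη => (hasDeriv_F hη.2).hasDerivWithinAt
  have heq : EqOn (fun η => |- (Real.exp y * (1 - η) / Tf y η)| • G (Real.exp y * Tf y η))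
      (fun η => Real.exp y ^ (j + 3) * H η) A := by
    intro η hη
    have hp := Tf_pos hη.2
    have h1 : 0 < 1 - η := by linarith [hη.2]
    simp only [G, H, sqrt_F hη.2, abs_neg, smul_eq_mul]
    rw [abs_of_pos (by positivity)]
    field_simp
    ring
  have i1 := integrableOn_image_iff_integrableOn_abs_deriv_smul measurableSet_Ioo hder hinj G
  have i2 := integral_image_eq_integral_abs_deriv_smul measurableSet_Ioo hder hinj G
  rw [image_F, integrableOn_congr_fun heq measurableSet_Ioo] at i1
  rw [image_F, setIntegral_congr_fun measurableSet_Ioo heq, integral_const_mul] at i2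
  have i3 : IntegrableOn (fun η => Real.exp y ^ (j + 3) * H η) A ↔ IntegrableOn H A := by
    unfold IntegrableOn
    exact integrable_const_mul_iff (isUnit_iff_ne_zero.2 (by positivity)) _
  rw [i3] at i1
  constructor
  · exact ⟨fun H1 => (i1.1 (H1.mono_set hSs)).of_forall_sdiff_eq_zero measurableSet_Ioo hA,
      fun H1 => (i1.2 (H1.mono_set hAs)).of_forall_sdiff_eq_zero measurableSet_Ioi hS⟩
  · rw [setIntegral_eq_of_subset_of_forall_sdiff_eq_zero measurableSet_Ioi hSs hS, i2,
      setIntegral_eq_of_subset_of_forall_sdiff_eq_zero measurableSet_Ioo hAs hA]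
end cov

/-! ### Moments of `φ'` and the density and pressure profiles -/

section moments
variable {φ : ℝ → ℝ} {y : ℝ}

lemma d_Tf_integrable (h : Prof φ) (y : ℝ) (i j : ℕ) :
    IntegrableOn (fun η => deriv φ η * (1 - η) ^ i * Tf y η ^ j) (Ioo 0 1) := by
  have h0 : IntegrableOn (deriv φ) (Ioo 0 1) :=
    ((intervalIntegrable_iff_integrableOn_Ioc_of_le zero_le_one).1 (h.d_integrable 1)).mono_set
      Ioo_subset_Ioc_self
  refine Integrable.mono' h0 ?_ ?_
  · refine (h0.aestronglyMeasurable.mul ?_).mul ?_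
    · exact (by fun_prop : Continuous fun η : ℝ => (1 - η) ^ i).aestronglyMeasurable
    · exact ((Tf_cont' y).pow j).aestronglyMeasurable
  · filter_upwards [ae_restrict_mem measurableSet_Ioo] with η hη
    have h1 : 0 ≤ 1 - η := by linarith [hη.2]
    have h3 := Tf_nonneg y η
    have h2 : Tf y η ≤ 1 := (Tf_le hη.2.le).trans (by linarith [hη.1])
    rw [Real.norm_of_nonneg (by have := h.d_nonneg η; positivity)]
    have := h.d_nonneg η
    have e1 : (1 - η) ^ i ≤ 1 := pow_le_one₀ h1 (by linarith [hη.1])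
    have e2 : Tf y η ^ j ≤ 1 := pow_le_one₀ h3 h2
    calc deriv φ η * (1 - η) ^ i * Tf y η ^ j ≤ deriv φ η * 1 * 1 := by gcongr
      _ = _ := by ring

/-- The rescaled second moment `e^{-5y} ∫ φ'(1 - e^{-y}⟨v⟩)|v|² dv`. -/
def k2 (φ : ℝ → ℝ) (y : ℝ) : ℝ :=
  4 * Real.pi * ∫ η in Ioo (0:ℝ) 1, deriv φ η * (1 - η) * Tf y η ^ 3

lemma mom_integrable (h : Prof φ) (y : ℝ) (j : ℕ) :
    Integrable (fun v : V3 => deriv φ (1 - Real.exp (-y) * jap v) * ‖v‖ ^ j) := by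
  have := (integrable_radial
    (fun s => deriv φ (1 - Real.exp (-y) * Real.sqrt (1 + s ^ 2)) * s ^ j)).2
  apply this
  apply (cov h j).1.2
  simpa using d_Tf_integrable h y 1 (j+1)

lemma mom2 (h : Prof φ) (y : ℝ) :
    ∫ v : V3, deriv φ (1 - Real.exp (-y) * jap v) * ‖v‖ ^ 2 = Real.exp y ^ 5 * k2 φ y := by
  have := integral_radial
    (fun s => deriv φ (1 - Real.exp (-y) * Real.sqrt (1 + s ^ 2)) * s ^ 2)
  unfold jap
  rw [this, (cov h 2).2, k2]; ring

lemma mom0_le (h : Prof φ) (y : ℝ) :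
    ∫ v : V3, deriv φ (1 - Real.exp (-y) * jap v) ≤ 4 * Real.pi * φ 1 * Real.exp y ^ 3 := by
  have := integral_radial
    (fun s => deriv φ (1 - Real.exp (-y) * Real.sqrt (1 + s ^ 2)) * s ^ 0)
  have h2 := (cov (y := y) h 0).2
  have h3 := d_Tf_integrable h y 1 1
  have h4 := d_Tf_integrable h y 0 0
  have h5 := h.d_int_one
  rw [intervalIntegral.integral_of_le zero_le_one, integral_Ioc_eq_integral_Ioo] at h5
  simp only [pow_zero, mul_one, pow_one, zero_add] at this h2 h3 h4
  unfold jap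
  rw [this, h2, ← h5]
  have : ∫ η in Ioo (0:ℝ) 1, deriv φ η * (1 - η) * Tf y η ≤ ∫ η in Ioo (0:ℝ) 1, deriv φ η := by
    apply setIntegral_mono_on h3 h4 measurableSet_Ioo
    intro η hη
    have h1 : 0 ≤ 1 - η := by linarith [hη.2]
    have h3 := Tf_nonneg y η
    have h2 : Tf y η ≤ 1 := (Tf_le hη.2.le).trans (by linarith [hη.1])
    have := h.d_nonneg η
    calc deriv φ η * (1 - η) * Tf y η ≤ deriv φ η * 1 * 1 := by gcongr; linarith [hη.1]
      _ = _ := by ring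
  calc _ ≤ 4 * Real.pi * (Real.exp y ^ 3 * ∫ η in Ioo (0:ℝ) 1, deriv φ η) := by gcongr
    _ = _ := by ring

lemma d_four (h : Prof φ) : 4 * Real.pi * ∫ η in Ioo (0:ℝ) 1, deriv φ η * (1 - η) ^ 4 = 4 := by
  have := h.d_pow 3
  rw [intervalIntegral.integral_of_le zero_le_one, integral_Ioc_eq_integral_Ioo] at this
  rw [this]
  have := h.norm
  push_cast
  linarith

/-- The normalization of `φ` makes `4` the ultrarelativistic limit of the rescaled second
moment. -/
lemma k2_le (h : Prof φ) (y : ℝ) : k2 φ y ≤ 4 := by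
  rw [← d_four h, k2]
  have h3 := d_Tf_integrable h y 1 3
  have h4 := d_Tf_integrable h y 4 0
  simp only [pow_zero, mul_one, pow_one] at h3 h4
  refine mul_le_mul_of_nonneg_left ?_ (by positivity)
  apply setIntegral_mono_on h3 h4 measurableSet_Ioo
  intro η hη
  have h1 : 0 ≤ 1 - η := by linarith [hη.2]
  have := h.d_nonneg η
  have h2 := Tf_le (y := y) hη.2.le
  have h3 := Tf_nonneg y η
  calc deriv φ η * (1 - η) * Tf y η ^ 3 ≤ deriv φ η * (1 - η) * (1 - η) ^ 3 := by gcongr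
      _ = _ := by ring

lemma Tf_cube_ge {η : ℝ} (h0 : 0 ≤ η) (h1 : η ≤ 1) : (1 - η) ^ 3 - 3 * Real.exp (-y) ≤ Tf y η ^ 3 := by
  have he := Real.exp_pos (-y)
  have ha : 0 ≤ 1 - η := by linarith
  have ha' : (1 - η)^2 ≤ 1 := by nlinarith
  rcases le_or_gt ((1 - η) - Real.exp (-y)) 0 with hh | hh
  · have := Tf_nonneg y η
    have : 0 ≤ Tf y η ^ 3 := by positivity
    have : (1 - η) ^ 3 = (1-η)^2 * (1-η) := by ring
    nlinarith
  · have h2 := pow_le_pow_left₀ hh.le (Tf_ge (y := y) (η := η)) 3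
    have : ((1 - η) - Real.exp (-y))^3 = (1-η)^3 - 3 * (1-η)^2 * Real.exp (-y)
      + Real.exp (-y)^2 * (3 * (1 - η) - Real.exp (-y)) := by ring
    have : 0 ≤ Real.exp (-y)^2 * (3 * (1 - η) - Real.exp (-y)) := by
      apply mul_nonneg (by positivity); linarith
    nlinarith

lemma k2_ge (h : Prof φ) (y : ℝ) : 4 - 12 * Real.pi * φ 1 * Real.exp (-y) ≤ k2 φ y := by
  have h3 := d_Tf_integrable h y 1 3
  have h4 := d_Tf_integrable h y 4 0
  have h5 := d_Tf_integrable h y 0 0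
  simp only [pow_zero, mul_one, pow_one] at h3 h4 h5
  have h6 := h.d_int_one
  rw [intervalIntegral.integral_of_le zero_le_one, integral_Ioc_eq_integral_Ioo] at h6
  have : ∫ η in Ioo (0:ℝ) 1, (deriv φ η * (1 - η) ^ 4 - 3 * Real.exp (-y) * deriv φ η) ≤
      ∫ η in Ioo (0:ℝ) 1, deriv φ η * (1 - η) * Tf y η ^ 3 := by
    apply setIntegral_mono_on (h4.sub (h5.const_mul _)) h3 measurableSet_Ioo
    intro η hη
    have h1 : 0 ≤ 1 - η := by linarith [hη.2]
    have := h.d_nonneg η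
    have h2 := Tf_cube_ge (y := y) hη.1.le hη.2.le
    have he := Real.exp_pos (-y)
    calc _ ≤ deriv φ η * (1 - η) * ((1 - η) ^ 3 - 3 * Real.exp (-y)) := by
          have : 0 ≤ deriv φ η * Real.exp (-y) * η := by have := hη.1; positivity
          simp only [Pi.sub_apply]
          nlinarith
      _ ≤ _ := by gcongr
  rw [integral_sub h4 (h5.const_mul _), integral_const_mul, h6] at this
  have h7 := d_four h
  unfold k2
  have := mul_le_mul_of_nonneg_left this (by positivity : 0 ≤ 4 * Real.pi)
  linarith

lemma k2_cont (h : Prof φ) : Continuous (k2 φ) := by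
  unfold k2
  refine continuous_const.mul ?_
  have h5 := d_Tf_integrable h 0 0 0
  simp only [pow_zero, mul_one] at h5
  refine continuous_of_dominated (bound := deriv φ) ?_ ?_ h5 ?_
  · intro y
    have := d_Tf_integrable h y 1 3
    simp only [pow_one] at this
    exact this.aestronglyMeasurable
  · intro y
    filter_upwards [ae_restrict_mem measurableSet_Ioo] with η hη
    have h1 : 0 ≤ 1 - η := by linarith [hη.2]
    have h3 := Tf_nonneg y η
    have h2 : Tf y η ≤ 1 := (Tf_le hη.2.le).trans (by linarith [hη.1])
    have := h.d_nonneg η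
    rw [Real.norm_of_nonneg (by positivity)]
    have e2 : Tf y η ^ 3 ≤ 1 := pow_le_one₀ h3 h2
    calc deriv φ η * (1 - η) * Tf y η ^ 3 ≤ deriv φ η * 1 * 1 := by gcongr; linarith [hη.1]
      _ = _ := by ring
  · exact Eventually.of_forall fun η => continuous_const.mul ((Tf_cont η).pow 3)

/-- Both profiles have the form `∫₀¹ φ(η) (1-η)^i √((1-η)²-e^{-2y})^j dη` for every real `y`,
the integrand being zero past `1 - e^{-y}`. -/
lemma trunc (h : Prof φ) (y : ℝ) (i j : ℕ) (hj : j ≠ 0) :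
    ∫ η in (0:ℝ)..(max 0 (1 - Real.exp (-y))), φ η * (1 - η) ^ i * Tf y η ^ j
      = ∫ η in (0:ℝ)..1, φ η * (1 - η) ^ i * Tf y η ^ j := by
  have hc : Continuous fun η => φ η * (1 - η) ^ i * Tf y η ^ j := by
    have := h.cont
    have := Tf_cont' y
    fun_prop
  rw [← intervalIntegral.integral_add_adjacent_intervals (b := max 0 (1 - Real.exp (-y)))
    (hc.intervalIntegrable _ _) (hc.intervalIntegrable _ 1)]
  rw [left_eq_add]
  have he := Real.exp_pos (-y)
  rw [intervalIntegral.integral_of_le (by simp; exact he.le)]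
  apply setIntegral_eq_zero_of_forall_eq_zero
  intro η hη
  rw [Tf_zero hη.2 ((le_max_right _ _).trans hη.1.le), zero_pow hj, mul_zero]

lemma gEV_eq (h : Prof φ) (y : ℝ) : gEV φ y =
    4 * Real.pi * Real.exp (4 * y) * ∫ η in (0:ℝ)..1, φ η * (1 - η) ^ 2 * Tf y η := by
  have := trunc h y 2 1 one_ne_zero
  simp only [pow_one] at this
  rw [← this]
  unfold gEV
  split_ifs with hy
  · rw [max_eq_right (by simp [hy.le])]; rfl
  · rw [max_eq_left (by simp; linarith)]; simp

lemma hEV_eq (h : Prof φ) (y : ℝ) : hEV φ y =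
    4 * Real.pi / 3 * Real.exp (4 * y) * ∫ η in (0:ℝ)..1, φ η * Tf y η ^ 3 := by
  have := trunc h y 0 3 (by norm_num)
  simp only [pow_zero, mul_one] at this
  rw [← this]
  unfold hEV
  split_ifs with hy
  · rw [max_eq_right (by simp [hy.le])]
    congr 1
    apply intervalIntegral.integral_congr
    intro η hη
    simp only
    congr 1
    rw [uIcc_of_le (by simp [hy.le])] at hη
    have : (1 - η) ^ 2 - Real.exp (-2 * y) = Tf y η ^ 2 := (Tf_sq hη.2).symm
    rw [this, ← Real.rpow_natCast, ← Real.rpow_mul (Tf_nonneg _ _), ← Real.rpow_natCast]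
    norm_num
  · rw [max_eq_left (by simp; linarith)]; simp

lemma phi_Tf_cont (h : Prof φ) (i j : ℕ) : Continuous fun y =>
    ∫ η in (0:ℝ)..1, φ η * (1 - η) ^ i * Tf y η ^ j := by
  apply intervalIntegral.continuous_parametric_intervalIntegral_of_continuous'
  have := h.cont
  unfold Function.uncurry Tf
  fun_prop

lemma gEV_cont (h : Prof φ) : Continuous (gEV φ) := by
  rw [show gEV φ = _ from funext (gEV_eq h)]
  have := phi_Tf_cont h 2 1
  simp only [pow_one] at this
  fun_prop

lemma hEV_cont (h : Prof φ) : Continuous (hEV φ) := by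
  rw [show hEV φ = _ from funext (hEV_eq h)]
  have := phi_Tf_cont h 0 3
  simp only [pow_zero, mul_one] at this
  fun_prop

lemma phi_int (h : Prof φ) (y : ℝ) (i j : ℕ) (a : ℝ) :
    IntervalIntegrable (fun η => φ η * (1 - η) ^ i * Tf y η ^ j) volume 0 a := by
  have := h.cont
  have := Tf_cont' y
  exact (by fun_prop : Continuous fun η => φ η * (1 - η) ^ i * Tf y η ^ j).intervalIntegrable _ _

lemma gEV_nonneg (h : Prof φ) (y : ℝ) : 0 ≤ gEV φ y := by
  rw [gEV_eq h]
  apply mul_nonneg (by positivity)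
  apply intervalIntegral.integral_nonneg zero_le_one
  intro η hη
  have := h.nonneg η
  have := Tf_nonneg y η
  positivity

lemma hEV_nonneg (h : Prof φ) (y : ℝ) : 0 ≤ hEV φ y := by
  rw [hEV_eq h]
  apply mul_nonneg (by positivity)
  apply intervalIntegral.integral_nonneg zero_le_one
  intro η hη
  have := h.nonneg η
  have := Tf_nonneg y η
  positivity

lemma gEV_le (h : Prof φ) (y : ℝ) : gEV φ y ≤ Real.exp (4 * y) := by
  rw [gEV_eq h]
  have h3 := phi_int h y 2 1 1
  have h4 := phi_int h y 3 0 1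
  simp only [pow_one, pow_zero, mul_one] at h3 h4
  have : ∫ η in (0:ℝ)..1, φ η * (1 - η) ^ 2 * Tf y η ≤ ∫ η in (0:ℝ)..1, φ η * (1 - η) ^ 3 := by
    apply intervalIntegral.integral_mono_on zero_le_one h3 h4
    intro η hη
    have := h.nonneg η
    calc _ ≤ φ η * (1 - η) ^ 2 * (1 - η) := by gcongr; exact Tf_le hη.2
      _ = _ := by ring
  have h2 := h.norm
  calc _ ≤ 4 * Real.pi * Real.exp (4 * y) * ∫ η in (0:ℝ)..1, φ η * (1 - η) ^ 3 := by gcongr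
    _ = (4 * Real.pi * ∫ η in (0:ℝ)..1, φ η * (1 - η) ^ 3) * Real.exp (4 * y) := by ring
    _ = _ := by rw [h2, one_mul]

lemma hEV_le (h : Prof φ) (y : ℝ) : hEV φ y ≤ Real.exp (4 * y) / 3 := by
  rw [hEV_eq h]
  have h3 := phi_int h y 0 3 1
  have h4 := phi_int h y 3 0 1
  simp only [pow_zero, mul_one] at h3 h4
  have : ∫ η in (0:ℝ)..1, φ η * Tf y η ^ 3 ≤ ∫ η in (0:ℝ)..1, φ η * (1 - η) ^ 3 := by
    apply intervalIntegral.integral_mono_on zero_le_one h3 h4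
    intro η hη
    have := h.nonneg η
    have := Tf_nonneg y η
    gcongr; exact Tf_le hη.2
  have h2 := h.norm
  calc _ ≤ 4 * Real.pi / 3 * Real.exp (4 * y) * ∫ η in (0:ℝ)..1, φ η * (1 - η) ^ 3 := by gcongr
    _ = (4 * Real.pi * ∫ η in (0:ℝ)..1, φ η * (1 - η) ^ 3) * Real.exp (4 * y) / 3 := by ring
    _ = _ := by rw [h2, one_mul]

/-- A constant controlling the deviation from the ultrarelativistic limit. -/
def Cphi (φ : ℝ → ℝ) : ℝ := 12 * Real.pi * (φ 1 + ∫ η in (0:ℝ)..1, φ η)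

lemma int_phi_nonneg (h : Prof φ) : 0 ≤ ∫ η in (0:ℝ)..1, φ η :=
  intervalIntegral.integral_nonneg zero_le_one fun η _ => h.nonneg η

lemma Cphi_pos (h : Prof φ) : 0 < Cphi φ := by
  have := int_phi_nonneg h
  have := h.pos 1 one_pos
  unfold Cphi; positivity

lemma k2_ge' (h : Prof φ) (y : ℝ) : 4 * (1 - Cphi φ * Real.exp (-y)) ≤ k2 φ y := by
  refine le_trans ?_ (k2_ge h y)
  have := int_phi_nonneg h
  have h1 := h.pos 1 one_pos
  unfold Cphi
  have : 0 ≤ Real.exp (-y) * Real.pi * ∫ η in (0:ℝ)..1, φ η := by positivity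
  have : 0 ≤ Real.exp (-y) * Real.pi * φ 1 := by positivity
  nlinarith

lemma gEV_ge (h : Prof φ) (y : ℝ) : Real.exp (4 * y) * (1 - Cphi φ * Real.exp (-y)) ≤ gEV φ y := by
  rw [gEV_eq h]
  have h3 := phi_int h y 2 1 1
  have h4 := phi_int h y 3 0 1
  have h5 := phi_int h y 0 0 1
  simp only [pow_one, pow_zero, mul_one] at h3 h4 h5
  have : ∫ η in (0:ℝ)..1, (φ η * (1 - η) ^ 3 - Real.exp (-y) * φ η) ≤
      ∫ η in (0:ℝ)..1, φ η * (1 - η) ^ 2 * Tf y η := by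
    apply intervalIntegral.integral_mono_on zero_le_one (h4.sub (h5.const_mul _)) h3
    intro η hη
    have := h.nonneg η
    have he := Real.exp_pos (-y)
    calc _ ≤ φ η * (1 - η) ^ 2 * (1 - η - Real.exp (-y)) := by
          have : 0 ≤ φ η * Real.exp (-y) * (1 - (1 - η)^2) := by
            have := hη.1; have := hη.2
            apply mul_nonneg (by positivity); nlinarith
          nlinarith
      _ ≤ _ := by gcongr; exact Tf_ge
  rw [intervalIntegral.integral_sub h4 (h5.const_mul _), intervalIntegral.integral_const_mul] at this
  have h2 := h.norm
  have h1 := h.pos 1 one_pos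
  have h0 := int_phi_nonneg h
  rw [mul_comm (4 * Real.pi), mul_assoc]
  gcongr
  have := mul_le_mul_of_nonneg_left this (by positivity : 0 ≤ 4 * Real.pi)
  refine le_trans ?_ this
  rw [mul_sub, h2]
  unfold Cphi
  have : 0 ≤ Real.exp (-y) * Real.pi * ∫ η in (0:ℝ)..1, φ η := by positivity
  have : 0 ≤ Real.exp (-y) * Real.pi * φ 1 := by positivity
  nlinarith

lemma hEV_ge (h : Prof φ) (y : ℝ) : Real.exp (4 * y) / 3 * (1 - Cphi φ * Real.exp (-y)) ≤ hEV φ y := by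
  rw [hEV_eq h]
  have h3 := phi_int h y 0 3 1
  have h4 := phi_int h y 3 0 1
  have h5 := phi_int h y 0 0 1
  simp only [pow_zero, mul_one] at h3 h4 h5
  have : ∫ η in (0:ℝ)..1, (φ η * (1 - η) ^ 3 - 3 * Real.exp (-y) * φ η) ≤
      ∫ η in (0:ℝ)..1, φ η * Tf y η ^ 3 := by
    apply intervalIntegral.integral_mono_on zero_le_one (h4.sub (h5.const_mul _)) h3
    intro η hη
    have := h.nonneg η
    calc _ = φ η * ((1 - η) ^ 3 - 3 * Real.exp (-y)) := by ring
      _ ≤ _ := by gcongr; exact Tf_cube_ge hη.1 hη.2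
  rw [intervalIntegral.integral_sub h4 (h5.const_mul _), intervalIntegral.integral_const_mul] at this
  have h2 := h.norm
  have h1 := h.pos 1 one_pos
  have h0 := int_phi_nonneg h
  rw [show 4 * Real.pi / 3 * Real.exp (4 * y) * ∫ η in (0:ℝ)..1, φ η * Tf y η ^ 3 =
    Real.exp (4 * y) / 3 * (4 * Real.pi * ∫ η in (0:ℝ)..1, φ η * Tf y η ^ 3) by ring]
  gcongr
  have := mul_le_mul_of_nonneg_left this (by positivity : 0 ≤ 4 * Real.pi)
  refine le_trans ?_ this
  rw [mul_sub, h2]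
  unfold Cphi
  have : 0 ≤ Real.exp (-y) * Real.pi * φ 1 := by positivity
  nlinarith
end moments

/-! ### Angular moments over the sphere -/

/-- The cosine of the angle between a unit vector `e` and `v` (zero at `v = 0`). -/
def cosang (e v : V3) : ℝ := ⟪e, v⟫ / ‖v‖

lemma cosang_abs {e : V3} (he : ‖e‖ = 1) (v : V3) : |cosang e v| ≤ 1 := by
  have := abs_real_inner_div_norm_mul_norm_le_one e v
  rwa [he, one_mul] at this

lemma cosang_meas (e : V3) : Measurable (cosang e) := by
  unfold cosang
  exact (by fun_prop : Measurable fun v : V3 => ⟪e, v⟫).div measurable_norm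

lemma cos_integrable {H : ℝ → ℝ} (hH : Integrable fun v : V3 => H ‖v‖) {e : V3} (he : ‖e‖ = 1)
    (n : ℕ) : Integrable fun v : V3 => H ‖v‖ * cosang e v ^ n := by
  refine hH.mul_bdd (c := 1) ((cosang_meas e).pow_const n).aestronglyMeasurable ?_
  refine Eventually.of_forall fun v => ?_
  rw [norm_pow]
  exact pow_le_one₀ (norm_nonneg _) (cosang_abs he v)

lemma iadd {f g : V3 → ℝ} (hf : Integrable f) (hg : Integrable g) :
    Integrable fun v => f v + g v := hf.add hg

/-- By rotation invariance the moments of the angle do not depend on the reference direction. -/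
lemma cos_inv {H : ℝ → ℝ} {e e' : V3} (he : ‖e‖ = 1) (he' : ‖e'‖ = 1) (n : ℕ) :
    ∫ v : V3, H ‖v‖ * cosang e v ^ n = ∫ v : V3, H ‖v‖ * cosang e' v ^ n := by
  set R : V3 ≃ₗᵢ[ℝ] V3 := (ℝ ∙ (e - e'))ᗮ.reflection with hR
  have hRe : R e = e' := Submodule.reflection_sub (he.trans he'.symm)
  rw [← R.measurePreserving.integral_comp R.toHomeomorph.measurableEmbedding
    (fun v => H ‖v‖ * cosang e' v ^ n)]
  congr 1
  ext v
  simp only [cosang, ← hRe, LinearIsometryEquiv.norm_map, LinearIsometryEquiv.inner_map_map]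

/-- The `i`-th coordinate unit vector. -/
def ei (i : Fin 3) : V3 := EuclideanSpace.single i (1 : ℝ)

lemma ei_norm (i : Fin 3) : ‖ei i‖ = 1 := by simp [ei]

lemma cosang_ei (i : Fin 3) (v : V3) : cosang (ei i) v = v i / ‖v‖ := by
  simp [cosang, ei, EuclideanSpace.inner_single_left]

/-- The two unit bisectors `(e_i ± e_j)/√2`. -/
def bis (i j : Fin 3) (s : ℝ) : V3 := (Real.sqrt 2)⁻¹ • (ei i + s • ei j)

lemma bis_norm {i j : Fin 3} (hij : i ≠ j) {s : ℝ} (hs : s ^ 2 = 1) : ‖bis i j s‖ = 1 := by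
  unfold bis
  rw [norm_smul]
  have : ‖ei i + s • ei j‖ = Real.sqrt 2 := by
    rw [← Real.sqrt_sq (norm_nonneg (ei i + s • ei j)), norm_add_sq_real, ei_norm, norm_smul, ei_norm]
    have : ⟪ei i, s • ei j⟫ = 0 := by
      simp [ei, inner_smul_right, EuclideanSpace.inner_single_left, hij]
    rw [this]
    congr 1
    have : ‖s‖ ^ 2 = 1 := by rw [Real.norm_eq_abs, sq_abs, hs]
    rw [mul_pow, this]; norm_num
  rw [this, norm_inv, Real.norm_of_nonneg (Real.sqrt_nonneg 2), inv_mul_cancel₀ (by positivity)]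

lemma cosang_bis (i j : Fin 3) (s : ℝ) (v : V3) :
    cosang (bis i j s) v = (Real.sqrt 2)⁻¹ * (cosang (ei i) v + s * cosang (ei j) v) := by
  unfold bis cosang
  rw [inner_smul_left, inner_add_left, inner_smul_left]
  simp; ring

lemma cos_sum {v : V3} (hv : v ≠ 0) :
    cosang (ei 0) v ^ 2 + cosang (ei 1) v ^ 2 + cosang (ei 2) v ^ 2 = 1 := by
  simp only [cosang_ei]
  have h := EuclideanSpace.norm_sq_eq v
  simp only [Fin.sum_univ_three, Real.norm_eq_abs, sq_abs] at h
  have : ‖v‖ ≠ 0 := norm_ne_zero_iff.2 hv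
  field_simp
  linarith

lemma ae_ne_zero : ∀ᵐ v : V3, v ≠ 0 := by
  have : (volume : Measure V3) {0} = 0 := measure_singleton 0
  exact (measure_eq_zero_iff_ae_notMem.1 this).mono fun v hv => by simpa using hv

/-- The average of `cos²` over the sphere is `1/3`. -/
lemma cos_two {H : ℝ → ℝ} (hH : Integrable fun v : V3 => H ‖v‖) {e : V3} (he : ‖e‖ = 1) :
    ∫ v : V3, H ‖v‖ * cosang e v ^ 2 = (∫ v : V3, H ‖v‖) / 3 := by
  have hi := fun i => cos_integrable hH (ei_norm i) 2
  have : ∫ v : V3, H ‖v‖ = ∫ v : V3, (H ‖v‖ * cosang (ei 0) v ^ 2 + H ‖v‖ * cosang (ei 1) v ^ 2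
      + H ‖v‖ * cosang (ei 2) v ^ 2) := by
    apply integral_congr_ae
    filter_upwards [ae_ne_zero] with v hv
    rw [← mul_add, ← mul_add, cos_sum hv, mul_one]
  rw [this, integral_add (iadd (hi 0) (hi 1)) (hi 2), integral_add (hi 0) (hi 1),
    cos_inv (ei_norm 0) he, cos_inv (ei_norm 1) he, cos_inv (ei_norm 2) he]
  ring

/-- The average of `cos⁴` over the sphere is `1/5`: by rotation invariance all the fourth powers
along `e_i` and `(e_i ± e_j)/√2` have the same average, and
`½ ∑ t_i⁴ + ∑_{i<j} ((t_i + t_j)⁴ + (t_i - t_j)⁴)/4 = 3/2` on the unit sphere. -/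
lemma cos_four {H : ℝ → ℝ} (hH : Integrable fun v : V3 => H ‖v‖) {e : V3} (he : ‖e‖ = 1) :
    ∫ v : V3, H ‖v‖ * cosang e v ^ 4 = (∫ v : V3, H ‖v‖) / 5 := by
  have hi := fun i => (cos_integrable hH (ei_norm i) 4).const_mul (1/2)
  have h01 : (0 : Fin 3) ≠ 1 := by decide
  have h02 : (0 : Fin 3) ≠ 2 := by decide
  have h12 : (1 : Fin 3) ≠ 2 := by decide
  have hp : (1:ℝ)^2 = 1 := by norm_num
  have hm : (-1:ℝ)^2 = 1 := by norm_num
  have hb := fun {i j : Fin 3} (hij : i ≠ j) (s : ℝ) (hs : s^2=1) =>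
    cos_integrable hH (bis_norm hij hs) 4
  have key : ∫ v : V3, (3/2) * H ‖v‖ = ∫ v : V3, (
      (1/2) * (H ‖v‖ * cosang (ei 0) v ^ 4) + (1/2) * (H ‖v‖ * cosang (ei 1) v ^ 4)
      + (1/2) * (H ‖v‖ * cosang (ei 2) v ^ 4)
      + H ‖v‖ * cosang (bis 0 1 1) v ^ 4 + H ‖v‖ * cosang (bis 0 1 (-1)) v ^ 4
      + H ‖v‖ * cosang (bis 0 2 1) v ^ 4 + H ‖v‖ * cosang (bis 0 2 (-1)) v ^ 4
      + H ‖v‖ * cosang (bis 1 2 1) v ^ 4 + H ‖v‖ * cosang (bis 1 2 (-1)) v ^ 4) := by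
    apply integral_congr_ae
    filter_upwards [ae_ne_zero] with v hv
    have h1 := cos_sum hv
    simp only [cosang_bis]
    have h2 : (Real.sqrt 2)⁻¹ ^ 4 = 1/4 := by
      rw [inv_pow, show (4:ℕ) = 2 * 2 from rfl, pow_mul, Real.sq_sqrt (by norm_num)]; norm_num
    simp only [mul_pow, h2]
    linear_combination (-(3/2) * H ‖v‖ *
      (cosang (ei 0) v ^ 2 + cosang (ei 1) v ^ 2 + cosang (ei 2) v ^ 2 + 1)) * h1
  have a1 := iadd (hi 0) (hi 1)
  have a2 := iadd a1 (hi 2)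
  have a3 := iadd a2 (hb h01 1 hp)
  have a4 := iadd a3 (hb h01 (-1) hm)
  have a5 := iadd a4 (hb h02 1 hp)
  have a6 := iadd a5 (hb h02 (-1) hm)
  have a7 := iadd a6 (hb h12 1 hp)
  rw [integral_const_mul, integral_add a7 (hb h12 (-1) hm), integral_add a6 (hb h12 1 hp),
    integral_add a5 (hb h02 (-1) hm), integral_add a4 (hb h02 1 hp),
    integral_add a3 (hb h01 (-1) hm), integral_add a2 (hb h01 1 hp), integral_add a1 (hi 2),
    integral_add (hi 0) (hi 1)] at key
  simp only [integral_const_mul] at key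
  rw [cos_inv (ei_norm 0) he, cos_inv (ei_norm 1) he, cos_inv (ei_norm 2) he,
    cos_inv (bis_norm h01 hp) he, cos_inv (bis_norm h01 hm) he, cos_inv (bis_norm h02 hp) he,
    cos_inv (bis_norm h02 hm) he, cos_inv (bis_norm h12 hp) he, cos_inv (bis_norm h12 hm) he] at key
  linarith

/-! ### The Poisson bracket along `a(|x|) x·v` -/

/-- The compactness `m(r)/r`. -/
def nn (φ : ℝ → ℝ) (Y : ℝ → ℝ) (r : ℝ) : ℝ := mEV φ Y r / r
/-- `e^{-2λ} = 1 - 2m/r`. -/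
def DD (φ : ℝ → ℝ) (Y : ℝ → ℝ) (r : ℝ) : ℝ := 1 - 2 * nn φ Y r
/-- `r μ'(r) = -r y'(r)`. -/
def MM (φ : ℝ → ℝ) (Y : ℝ → ℝ) (r : ℝ) : ℝ :=
  (nn φ Y r + 4 * Real.pi * r ^ 2 * hEV φ (Y r)) / DD φ Y r
/-- `(4π r²/3) e^{-y} ∫ φ'(1 - e^{-y}⟨v⟩)|v|² dv`, the factor in `λ_h = -a S e^{λ}`. -/
def SS (φ : ℝ → ℝ) (Y : ℝ → ℝ) (r : ℝ) : ℝ :=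
  4 * Real.pi * r ^ 2 * Real.exp (4 * Y r) * k2 φ (Y r) / 3

section basic
variable {φ : ℝ → ℝ} {κ : ℝ} {Y : ℝ → ℝ}

lemma DD_pos (hY : IsEVSteady φ κ Y) {r : ℝ} (hr : 0 < r) : 0 < DD φ Y r := by
  have := (hY.2.2 r hr).1
  unfold DD nn
  rw [← mul_div_assoc, sub_pos, div_lt_one hr]
  exact this

lemma Y_deriv (hY : IsEVSteady φ κ Y) {r : ℝ} (hr : 0 < r) : HasDerivAt Y (-(MM φ Y r / r)) r := by
  have h1 : DifferentiableAt ℝ Y r :=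
    ((hY.1.differentiableOn (by norm_num)).differentiableAt (Ici_mem_nhds hr))
  have h2 := h1.hasDerivAt
  rw [(hY.2.2 r hr).2] at h2
  refine h2.congr_deriv ?_
  have h3 := (DD_pos hY hr).ne'
  have h4 : 1 - 2 * mEV φ Y r / r = DD φ Y r := by unfold DD nn; ring
  rw [h4]
  unfold MM nn
  field_simp

lemma Y_contOn (hY : IsEVSteady φ κ Y) : ContinuousOn Y (Ici 0) := hY.1.continuousOn

/-- The test function `a(|x|) x·v`. -/
def hT (a : ℝ → ℝ) (z : V3 × V3) : ℝ := a ‖z.1‖ * ⟪z.1, z.2⟫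

lemma grad_norm {x : V3} (hx : x ≠ 0) {f : ℝ → ℝ} {f' : ℝ} (hf : HasDerivAt f f' ‖x‖) :
    HasGradientAt (fun x : V3 => f ‖x‖) ((f' / ‖x‖) • x) x := by
  have h1 : HasFDerivAt (fun x : V3 => ‖x‖) (‖x‖⁻¹ • innerSL ℝ x) x := by
    have h2 := (hasStrictFDerivAt_norm_sq x).hasFDerivAt.sqrt (by simpa using hx)
    have h3 : (fun x : V3 => Real.sqrt (‖x‖ ^ 2)) = fun x => ‖x‖ := by
      ext x; exact Real.sqrt_sq (norm_nonneg _)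
    rw [h3] at h2
    refine h2.congr_fderiv ?_
    rw [Real.sqrt_sq (norm_nonneg _)]
    ext v
    simp; ring
  rw [hasGradientAt_iff_hasFDerivAt]
  refine (hf.comp_hasFDerivAt x h1).congr_fderiv ?_
  ext v
  simp; ring

lemma grad_jap (v : V3) (c : ℝ) :
    HasGradientAt (fun v : V3 => c * jap v) ((c / jap v) • v) v := by
  have hp : (0:ℝ) < 1 + ‖v‖ ^ 2 := by positivity
  rw [hasGradientAt_iff_hasFDerivAt]
  have h2 := ((((hasStrictFDerivAt_norm_sq v).hasFDerivAt.const_add 1).sqrt hp.ne').const_mul c)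
  refine h2.congr_fderiv ?_
  ext w
  simp [jap]; ring

lemma grad_hx {x v : V3} (hx : x ≠ 0) {a : ℝ → ℝ} {a' : ℝ} (ha : HasDerivAt a a' ‖x‖) :
    HasGradientAt (fun x => hT a (x, v)) ((a' / ‖x‖ * ⟪x, v⟫) • x + a ‖x‖ • v) x := by
  have h1 := (grad_norm hx ha).hasFDerivAt
  have h2 : HasFDerivAt (fun x : V3 => ⟪x, v⟫) (innerSL ℝ v) x := by
    have := (innerSL ℝ v).hasFDerivAt (x := x)
    convert this using 1
    ext x; simp [real_inner_comm]
  rw [hasGradientAt_iff_hasFDerivAt]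
  refine (h1.mul h2).congr_fderiv ?_
  ext w
  simp; ring

lemma grad_hv {x v : V3} (a : ℝ → ℝ) :
    HasGradientAt (fun v => hT a (x, v)) (a ‖x‖ • x) v := by
  have h2 : HasFDerivAt (fun v : V3 => ⟪x, v⟫) (innerSL ℝ x) v := (innerSL ℝ x).hasFDerivAt
  rw [hasGradientAt_iff_hasFDerivAt]
  refine (h2.const_mul (a ‖x‖)).congr_fderiv ?_
  ext w
  simp

lemma jap_pos (v : V3) : 0 < jap v := Real.sqrt_pos.2 (by positivity)
lemma jap_sq (v : V3) : jap v ^ 2 = 1 + ‖v‖ ^ 2 := Real.sq_sqrt (by positivity)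

lemma bracket_formula (hY : IsEVSteady φ κ Y) {yinf : ℝ} {x v : V3} (hx : x ≠ 0) {a : ℝ → ℝ} {a' : ℝ}
    (ha : HasDerivAt a a' ‖x‖) :
    pbracket (hT a) (Epart fun r => yinf - Y r) (x, v) =
      Real.exp (yinf - Y ‖x‖) / jap v * (‖x‖ * a' * wfun (x, v) ^ 2 +
        a ‖x‖ * (1 - MM φ Y ‖x‖) * ‖v‖ ^ 2 - a ‖x‖ * MM φ Y ‖x‖) := by
  have hr : 0 < ‖x‖ := norm_pos_iff.2 hx
  unfold pbracket
  simp only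
  rw [(grad_hx hx ha).gradient, (grad_hv a).gradient]
  have g1 : HasGradientAt (fun v => Epart (fun r => yinf - Y r) (x, v))
    ((Real.exp (yinf - Y ‖x‖) / jap v) • v) v :=
    grad_jap v (Real.exp (yinf - Y ‖x‖))
  have hd : HasDerivAt (fun r => Real.exp (yinf - Y r) * jap v)
      (Real.exp (yinf - Y ‖x‖) * (MM φ Y ‖x‖ / ‖x‖) * jap v) ‖x‖ := by
    have := (((Y_deriv hY hr).const_sub yinf).exp).mul_const (jap v)
    refine this.congr_deriv ?_
    ring
  have g2 : HasGradientAt (fun x => Epart (fun r => yinf - Y r) (x, v)) _ x := grad_norm hx hd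
  rw [g1.gradient, g2.gradient]
  have hj := (jap_pos v).ne'
  have hj2 := jap_sq v
  simp only [inner_smul_left, inner_smul_right, inner_add_left, real_inner_self_eq_norm_sq, wfun]
  simp
  field_simp
  rw [hj2]
  ring

end basic

/-! ### The perturbation and its pointwise bound -/

section formulas
variable {φ : ℝ → ℝ} {κ : ℝ} {Y : ℝ → ℝ}

/-- `λ(r)` of the steady state. -/
def lamOf (φ : ℝ → ℝ) (Y : ℝ → ℝ) (r : ℝ) : ℝ := -(1 / 2) * Real.log (1 - 2 * mEV φ Y r / r)

lemma exp_neg_lam (hY : IsEVSteady φ κ Y) {r : ℝ} (hr : 0 < r) : Real.exp (-(lamOf φ Y r)) = Real.sqrt (DD φ Y r) := by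
  have h4 : 1 - 2 * mEV φ Y r / r = DD φ Y r := by unfold DD nn; ring
  have h3 := DD_pos hY hr
  unfold lamOf
  rw [h4, ← Real.exp_log (Real.sqrt_pos.2 h3), Real.log_sqrt h3.le]
  congr 1; ring

lemma exp_lam (hY : IsEVSteady φ κ Y) {r : ℝ} (hr : 0 < r) : Real.exp (lamOf φ Y r) = (Real.sqrt (DD φ Y r))⁻¹ := by
  rw [← exp_neg_lam hY hr, Real.exp_neg, inv_inv]

lemma phiE_eq (yinf : ℝ) (x v : V3) :
    phiE φ (Real.exp yinf) (Epart (fun r => yinf - Y r) (x, v))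
      = -(Real.exp (-yinf) * deriv φ (1 - Real.exp (-Y ‖x‖) * jap v)) := by
  unfold phiE Epart
  have h1 : (fun s => φ (1 - s / Real.exp yinf)) =
      fun s => (fun t => φ (1 - t)) ((Real.exp yinf)⁻¹ * s) := by
    ext s; congr 2; rw [div_eq_inv_mul]
  rw [h1, deriv_comp_mul_left (Real.exp yinf)⁻¹ (fun t => φ (1 - t)),
    deriv_comp_const_sub, Real.exp_neg]
  simp only [smul_eq_mul, mul_neg, neg_inj]
  congr 3
  rw [sub_eq_add_neg, Real.exp_add]
  field_simp

lemma wfun_eq (x v : V3) : wfun (x, v) = ‖v‖ * cosang (‖x‖⁻¹ • x) v := by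
  unfold wfun cosang
  rcases eq_or_ne v 0 with rfl | hv
  · simp
  · have := norm_ne_zero_iff.2 hv
    rw [inner_smul_left]
    simp
    field_simp

lemma unit_norm {x : V3} (hx : x ≠ 0) : ‖‖x‖⁻¹ • x‖ = 1 := by
  rw [norm_smul, norm_inv, norm_norm, inv_mul_cancel₀ (norm_ne_zero_iff.2 hx)]

/-- The radial weight of the moments. -/
def Hm (φ : ℝ → ℝ) (y s : ℝ) : ℝ := deriv φ (1 - Real.exp (-y) * Real.sqrt (1 + s ^ 2)) * s ^ 2

lemma Hm_eq (y : ℝ) (v : V3) :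
    Hm φ y ‖v‖ = deriv φ (1 - Real.exp (-y) * jap v) * ‖v‖ ^ 2 := rfl

lemma Hm_int (h : Prof φ) (y : ℝ) : Integrable fun v : V3 => Hm φ y ‖v‖ := mom_integrable h y 2

lemma Hm_val (h : Prof φ) (y : ℝ) : ∫ v : V3, Hm φ y ‖v‖ = Real.exp y ^ 5 * k2 φ y := mom2 h y

/-- The perturbation of `λ` generated by `a(|x|) x·v` is `-a S e^λ`. -/
lemma lamh_formula (h : Prof φ) (hY : IsEVSteady φ κ Y) {yinf : ℝ} {x : V3} (hx : x ≠ 0) (a : ℝ → ℝ) :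
    lamh (fun r => yinf - Y r) (lamOf φ Y) (Real.exp yinf) φ (hT a) x =
      -(a ‖x‖ * SS φ Y ‖x‖ / Real.sqrt (DD φ Y ‖x‖)) := by
  have hr : 0 < ‖x‖ := norm_pos_iff.2 hx
  unfold lamh
  have h1 : (fun v : V3 => phiE φ (Real.exp yinf) (Epart (fun r => yinf - Y r) (x, v)) *
      hT a (x, v) * wfun (x, v)) =
      fun v => -(Real.exp (-yinf) * a ‖x‖ * ‖x‖) *
        (Hm φ (Y ‖x‖) ‖v‖ * cosang (‖x‖⁻¹ • x) v ^ 2) := by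
    ext v
    rw [phiE_eq, Hm_eq]
    have h2 := wfun_eq x v
    have h3 : ⟪x, v⟫ = ‖x‖ * wfun (x, v) := by unfold wfun; field_simp
    unfold hT
    simp only
    rw [h3, h2]
    ring
  rw [h1, integral_const_mul, cos_two (Hm_int h _) (unit_norm hx), Hm_val h, Real.exp_add,
    exp_lam hY hr]
  unfold SS
  have e1 : Real.exp (yinf - Y ‖x‖) * Real.exp (-yinf) * Real.exp (Y ‖x‖) ^ 5
      = Real.exp (4 * Y ‖x‖) := by
    rw [← Real.exp_nat_mul, ← Real.exp_add, ← Real.exp_add]; congr 1; push_cast; ring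
  rw [← e1]
  ring

lemma fh_formula (h : Prof φ) (hY : IsEVSteady φ κ Y) {yinf : ℝ} {x v : V3} (hx : x ≠ 0) {a : ℝ → ℝ} {a' : ℝ}
    (ha : HasDerivAt a a' ‖x‖) :
    fh (fun r => yinf - Y r) (lamOf φ Y) (Real.exp yinf) φ (hT a) (x, v) =
      phiE φ (Real.exp yinf) (Epart (fun r => yinf - Y r) (x, v)) *
        (Real.exp (yinf - Y ‖x‖) / jap v * Real.sqrt (DD φ Y ‖x‖) *
          (‖v‖ ^ 2 * ((‖x‖ * a' - a ‖x‖ * SS φ Y ‖x‖ / DD φ Y ‖x‖) * cosang (‖x‖⁻¹ • x) v ^ 2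
            + a ‖x‖ * (1 - MM φ Y ‖x‖)) - a ‖x‖ * MM φ Y ‖x‖)) := by
  have hr : 0 < ‖x‖ := norm_pos_iff.2 hx
  unfold fh
  simp only
  rw [lamh_formula h hY hx, exp_neg_lam hY hr, bracket_formula hY hx ha, wfun_eq]
  congr 1
  have hD := DD_pos hY hr
  have hD2 : Real.sqrt (DD φ Y ‖x‖) ^ 2 = DD φ Y ‖x‖ := Real.sq_sqrt hD.le
  have hsD := Real.sqrt_pos.2 hD
  have hj := jap_pos v
  rw [← hD2]
  rw [Real.sqrt_sq hsD.le]
  field_simp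
  ring

/-- The average of `(b cos² + z)²` over the sphere. -/
def Fq (b z : ℝ) : ℝ := b ^ 2 / 5 + 2 * b * z / 3 + z ^ 2

/-- The integral over `v` of the leading part of the pointwise bound. -/
lemma v_integral (h : Prof φ) (y b z p q : ℝ) {e : V3} (he : ‖e‖ = 1) :
    Integrable (fun v : V3 => p * (Hm φ y ‖v‖ * (b * cosang e v ^ 2 + z) ^ 2)
        + q * deriv φ (1 - Real.exp (-y) * jap v)) ∧
    ∫ v : V3, (p * (Hm φ y ‖v‖ * (b * cosang e v ^ 2 + z) ^ 2)
        + q * deriv φ (1 - Real.exp (-y) * jap v))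
      = p * (Real.exp y ^ 5 * k2 φ y * Fq b z)
        + q * ∫ v : V3, deriv φ (1 - Real.exp (-y) * jap v) := by
  have i0 := Hm_int h y
  have i2 := cos_integrable i0 he 2
  have i4 := cos_integrable i0 he 4
  have im : Integrable fun v : V3 => deriv φ (1 - Real.exp (-y) * jap v) := by
    simpa using mom_integrable h y 0
  have e1 : (fun v : V3 => p * (Hm φ y ‖v‖ * (b * cosang e v ^ 2 + z) ^ 2)
        + q * deriv φ (1 - Real.exp (-y) * jap v)) = fun v =>
      (p * b ^ 2 * (Hm φ y ‖v‖ * cosang e v ^ 4) + p * (2 * b * z) * (Hm φ y ‖v‖ * cosang e v ^ 2)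
        + p * z ^ 2 * Hm φ y ‖v‖) + q * deriv φ (1 - Real.exp (-y) * jap v) := by
    ext v; ring
  rw [e1]
  have j4 := i4.const_mul (p * b ^ 2)
  have j2 := i2.const_mul (p * (2 * b * z))
  have j0 := i0.const_mul (p * z ^ 2)
  have jm := im.const_mul q
  refine ⟨iadd (iadd (iadd j4 j2) j0) jm, ?_⟩
  rw [integral_add (iadd (iadd j4 j2) j0) jm, integral_add (iadd j4 j2) j0, integral_add j4 j2]
  simp only [integral_const_mul]
  rw [cos_two i0 he, cos_four i0 he, Hm_val h]
  unfold Fq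
  ring

/-- Pointwise bound of the first integrand of the second variation, after completing the square to
separate the terms of lower order in `|v|`. -/
lemma integrand_le (h : Prof φ) (hY : IsEVSteady φ κ Y) {yinf ε : ℝ} (hε : 0 < ε) {x v : V3} (hx : x ≠ 0) {a : ℝ → ℝ} {a' : ℝ}
    (ha : HasDerivAt a a' ‖x‖) :
    Real.exp (lamOf φ Y ‖x‖) *
      (fh (fun r => yinf - Y r) (lamOf φ Y) (Real.exp yinf) φ (hT a) (x, v)) ^ 2 /
        |phiE φ (Real.exp yinf) (Epart (fun r => yinf - Y r) (x, v))| ≤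
    Real.exp (yinf - 2 * Y ‖x‖) * Real.sqrt (DD φ Y ‖x‖) * (1 + ε) * (Hm φ (Y ‖x‖) ‖v‖ *
      ((‖x‖ * a' - a ‖x‖ * SS φ Y ‖x‖ / DD φ Y ‖x‖) * cosang (‖x‖⁻¹ • x) v ^ 2
            + a ‖x‖ * (1 - MM φ Y ‖x‖)) ^ 2) +
    Real.exp (yinf - 2 * Y ‖x‖) * Real.sqrt (DD φ Y ‖x‖) * ((1 + ε⁻¹) * (a ‖x‖ * MM φ Y ‖x‖) ^ 2)
      * deriv φ (1 - Real.exp (-Y ‖x‖) * jap v) := by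
  have hr : 0 < ‖x‖ := norm_pos_iff.2 hx
  rw [fh_formula h hY hx ha, phiE_eq, exp_lam hY hr, Hm_eq]
  set ψ := deriv φ (1 - Real.exp (-Y ‖x‖) * jap v) with hψ
  set u := (‖x‖ * a' - a ‖x‖ * SS φ Y ‖x‖ / DD φ Y ‖x‖) * cosang (‖x‖⁻¹ • x) v ^ 2
            + a ‖x‖ * (1 - MM φ Y ‖x‖)
  set t := a ‖x‖ * MM φ Y ‖x‖
  have hψ0 : 0 ≤ ψ := h.d_nonneg _
  have hD := DD_pos hY hr
  have hsD := Real.sqrt_pos.2 hD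
  set d := Real.sqrt (DD φ Y ‖x‖)
  have hj := jap_pos v
  have hj2 := jap_sq v
  have e1 : Real.exp (yinf - 2 * Y ‖x‖) =
      Real.exp (yinf - Y ‖x‖) ^ 2 * Real.exp (-yinf) := by
    rw [← Real.exp_nat_mul, ← Real.exp_add]; congr 1; push_cast; ring
  have e2 := Real.exp_pos (-yinf)
  have hL : d⁻¹ * (-(Real.exp (-yinf) * ψ) * (Real.exp (yinf - Y ‖x‖) / jap v * d *
      (‖v‖ ^ 2 * u - t))) ^ 2 / |-(Real.exp (-yinf) * ψ)| =
      Real.exp (yinf - 2 * Y ‖x‖) * d * ψ * ((‖v‖ ^ 2 * u - t) ^ 2 / jap v ^ 2) := by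
    rw [abs_neg, abs_of_nonneg (by positivity), e1]
    -- outside the support of the steady state both sides vanish, the left one as `0 / 0`
    rcases hψ0.eq_or_lt with h0 | h0
    · rw [← h0]; simp
    · field_simp
  rw [hL]
  have hmain : (‖v‖ ^ 2 * u - t) ^ 2 / jap v ^ 2 ≤ (1 + ε) * (‖v‖ ^ 2 * u ^ 2) + (1 + ε⁻¹) * t ^ 2 := by
    rw [div_le_iff₀ (by positivity), hj2]
    have h1 : (‖v‖ ^ 2 * u - t) ^ 2 ≤ (1 + ε) * (‖v‖ ^ 2 * u) ^ 2 + (1 + ε⁻¹) * t ^ 2 := by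
      have : (1 + ε) * (‖v‖ ^ 2 * u) ^ 2 + (1 + ε⁻¹) * t ^ 2 - (‖v‖ ^ 2 * u - t) ^ 2
          = ε⁻¹ * (ε * (‖v‖ ^ 2 * u) + t) ^ 2 := by field_simp; ring
      have : 0 ≤ ε⁻¹ * (ε * (‖v‖ ^ 2 * u) + t) ^ 2 := by positivity
      linarith
    refine h1.trans ?_
    have h2 : 0 ≤ (1 + ε) * (‖v‖ ^ 2 * u ^ 2) := by positivity
    have h3 : 0 ≤ (1 + ε⁻¹) * t ^ 2 * ‖v‖ ^ 2 := by positivity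
    nlinarith
  calc _ ≤ Real.exp (yinf - 2 * Y ‖x‖) * d * ψ *
        ((1 + ε) * (‖v‖ ^ 2 * u ^ 2) + (1 + ε⁻¹) * t ^ 2) := by gcongr
    _ = _ := by ring
end formulas

/-! ### Regularity of the steady state -/

section regularity
variable {φ : ℝ → ℝ} {κ : ℝ} {Y : ℝ → ℝ}

lemma mEV_max {r : ℝ} (hr : 0 ≤ r) : mEV φ Y r = mEV φ (fun s => Y (max 0 s)) r := by
  unfold mEV
  congr 1
  apply intervalIntegral.integral_congr
  intro s hs
  rw [uIcc_of_le hr] at hs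
  simp only [max_eq_right hs.1]

lemma mEV_integrand_cont (h : Prof φ) (hY : IsEVSteady φ κ Y) : Continuous fun s => gEV φ (Y (max 0 s)) * s ^ 2 := by
  have h1 : Continuous fun s => Y (max 0 s) :=
    (Y_contOn hY).comp_continuous (by fun_prop) fun s => mem_Ici.2 (le_max_left _ _)
  exact ((gEV_cont h).comp h1).mul (by fun_prop)

lemma mEV_deriv (h : Prof φ) (hY : IsEVSteady φ κ Y) {r : ℝ} (hr : 0 < r) :
    HasDerivAt (mEV φ Y) (4 * Real.pi * (gEV φ (Y r) * r ^ 2)) r := by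
  have hc := mEV_integrand_cont h hY
  have h1 := (hc.integral_hasStrictDerivAt 0 r).hasDerivAt.const_mul (4 * Real.pi)
  rw [max_eq_right hr.le] at h1
  refine h1.congr_of_eventuallyEq ?_
  filter_upwards [Ioi_mem_nhds hr] with s hs
  rw [mEV_max (le_of_lt hs)]; rfl

lemma nn_deriv (h : Prof φ) (hY : IsEVSteady φ κ Y) {r : ℝ} (hr : 0 < r) :
    HasDerivAt (nn φ Y) ((4 * Real.pi * r ^ 2 * gEV φ (Y r) - nn φ Y r) / r) r := by
  refine ((mEV_deriv h hY hr).div (hasDerivAt_id r) hr.ne').congr_deriv ?_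
  unfold nn
  simp only [id]
  field_simp

lemma nn_nonneg (h : Prof φ) {r : ℝ} (hr : 0 < r) : 0 ≤ nn φ Y r := by
  unfold nn mEV
  refine div_nonneg (mul_nonneg (by positivity) ?_) hr.le
  apply intervalIntegral.integral_nonneg hr.le
  intro s _
  exact mul_nonneg (gEV_nonneg h _) (by positivity)

lemma MM_nonneg (h : Prof φ) (hY : IsEVSteady φ κ Y) {r : ℝ} (hr : 0 < r) : 0 ≤ MM φ Y r := by
  have := nn_nonneg (Y := Y) h hr
  have := hEV_nonneg h (Y r)
  have := DD_pos hY hr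
  unfold MM; positivity

lemma Yc (hY : IsEVSteady φ κ Y) : ContinuousOn Y (Ioi 0) :=
  (Y_contOn hY).mono Ioi_subset_Ici_self

lemma nn_cont (h : Prof φ) (hY : IsEVSteady φ κ Y) : ContinuousOn (nn φ Y) (Ioi 0) := fun _ hr =>
  (nn_deriv h hY hr).continuousAt.continuousWithinAt

lemma DD_cont (h : Prof φ) (hY : IsEVSteady φ κ Y) : ContinuousOn (DD φ Y) (Ioi 0) :=
  continuousOn_const.sub (continuousOn_const.mul (nn_cont h hY))

lemma MM_cont (h : Prof φ) (hY : IsEVSteady φ κ Y) : ContinuousOn (MM φ Y) (Ioi 0) := by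
  have h1 := nn_cont h hY
  have h2 := DD_cont h hY
  have h3 : ContinuousOn (fun r => hEV φ (Y r)) (Ioi 0) :=
    (hEV_cont h).comp_continuousOn (Yc hY)
  have h4 : ContinuousOn (fun r : ℝ => 4 * Real.pi * r ^ 2) (Ioi 0) := by fun_prop
  exact (h1.add (h4.mul h3)).div h2 fun r hr => (DD_pos hY hr).ne'

lemma SS_cont (h : Prof φ) (hY : IsEVSteady φ κ Y) : ContinuousOn (SS φ Y) (Ioi 0) := by
  have h3 : ContinuousOn (fun r => k2 φ (Y r)) (Ioi 0) := (k2_cont h).comp_continuousOn (Yc hY)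
  have h5 := Yc hY
  have h4 : ContinuousOn (fun r : ℝ => 4 * Real.pi * r ^ 2 * Real.exp (4 * Y r)) (Ioi 0) := by
    fun_prop
  exact (h4.mul h3).div_const 3

lemma supp_integrable {f : ℝ → ℝ} {r1 r2 : ℝ} (h1 : 0 < r1) (hf : ContinuousOn f (Ioi 0))
    (hz : ∀ r, 0 < r → r ∉ Icc r1 r2 → f r = 0) : IntegrableOn f (Ioi 0) := by
  have hs : Icc r1 r2 ⊆ Ioi 0 := fun r hr => lt_of_lt_of_le h1 hr.1
  exact ((hf.mono hs).integrableOn_Icc).of_forall_sdiff_eq_zero measurableSet_Ioi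
    fun r hr => hz r hr.1 hr.2

/-- Fubini with an upper bound fibre by fibre; the junk value `0` of a divergent integral is
harmless as the bound is nonnegative. -/
lemma fubini_le {G B : V3 × V3 → ℝ} {N : V3 → ℝ} (hN : Integrable N) (hN0 : ∀ x, 0 ≤ N x)
    (hB : ∀ x : V3, x ≠ 0 → Integrable fun v => B (x, v))
    (hBN : ∀ x : V3, x ≠ 0 → ∫ v, B (x, v) ≤ N x)
    (hG : ∀ x : V3, x ≠ 0 → ∀ v, G (x, v) ≤ B (x, v)) :
    ∫ z, G z ≤ ∫ x, N x := by
  by_cases hi : Integrable G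
  · have hi' : Integrable G ((volume : Measure V3).prod (volume : Measure V3)) := hi
    have e : ∫ z, G z = ∫ x : V3, ∫ v : V3, G (x, v) := integral_prod G hi'
    rw [e]
    apply integral_mono_ae hi'.integral_prod_left hN
    filter_upwards [hi'.prod_right_ae, ae_ne_zero] with x hx hx0
    exact (integral_mono hx (hB x hx0) (hG x hx0)).trans (hBN x hx0)
  · rw [integral_undef hi]
    exact integral_nonneg hN0
end regularity

/-! ### Reduction of the second variation to a radial integral -/

section Abound
variable {φ : ℝ → ℝ} {κ : ℝ} {Y : ℝ → ℝ}

/-- Bound for the kinetic part of the second variation, as a radial density; the term with `Fq` is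
the leading one, the last term comes from the zeroth moment of `φ'`. -/
def W1 (φ : ℝ → ℝ) (Y a ra' : ℝ → ℝ) (ε r : ℝ) : ℝ :=
  Real.exp (-Y r) * (Real.sqrt (DD φ Y r) * ((1 + ε) * (3 * SS φ Y r *
      Fq (ra' r - a r * SS φ Y r / DD φ Y r) (a r * (1 - MM φ Y r)))
    + (1 + ε⁻¹) * (a r * MM φ Y r) ^ 2 *
      (4 * Real.pi * r ^ 2 * Real.exp (4 * Y r)) * (4 * Real.pi * φ 1 * Real.exp (-2 * Y r))))

/-- The contribution of `(δλ)²` to the second variation, as a radial density. -/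
def W2 (φ : ℝ → ℝ) (Y a : ℝ → ℝ) (r : ℝ) : ℝ :=
  Real.exp (-Y r) * ((2 * MM φ Y r + 1) * (a r * SS φ Y r) ^ 2 / Real.sqrt (DD φ Y r))

lemma Fq_nonneg (b z : ℝ) : 0 ≤ Fq b z := by
  unfold Fq
  nlinarith [sq_nonneg (z + b / 3), sq_nonneg b]

lemma SS_nonneg (h : Prof φ) (r : ℝ) : 0 ≤ SS φ Y r := by
  have : 0 ≤ k2 φ (Y r) := by
    unfold k2
    apply mul_nonneg (by positivity)
    apply setIntegral_nonneg measurableSet_Ioo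
    intro η hη
    have h1 : 0 ≤ 1 - η := by linarith [hη.2]
    have := h.d_nonneg η
    have := Tf_nonneg (Y r) η
    positivity
  unfold SS; positivity

lemma W1_nonneg (h : Prof φ) (a ra' : ℝ → ℝ) {ε : ℝ} (hε : 0 < ε) (r : ℝ) : 0 ≤ W1 φ Y a ra' ε r := by
  unfold W1
  have h1 := SS_nonneg (Y := Y) h r
  have h2 := Fq_nonneg (ra' r - a r * SS φ Y r / DD φ Y r) (a r * (1 - MM φ Y r))
  have h3 := h.nonneg 1
  positivity

lemma W1_integrable (h : Prof φ) (hY : IsEVSteady φ κ Y) {a ra' : ℝ → ℝ} {ε r1 r2 : ℝ} (h1 : 0 < r1)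
    (ha : ContinuousOn a (Ioi 0)) (ha' : ContinuousOn ra' (Ioi 0))
    (hz : ∀ r, 0 < r → r ∉ Icc r1 r2 → a r = 0 ∧ ra' r = 0) :
    IntegrableOn (W1 φ Y a ra' ε) (Ioi 0) := by
  have c1 := DD_cont h hY
  have c2 := MM_cont h hY
  have c3 := SS_cont h hY
  have c4 := Yc hY
  have c5 : ContinuousOn (fun r => a r * SS φ Y r / DD φ Y r) (Ioi 0) :=
    (ha.mul c3).div c1 fun r hr => (DD_pos hY hr).ne'
  apply supp_integrable (r2 := r2) h1
  · unfold W1 Fq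
    fun_prop
  · intro r hr hr'
    obtain ⟨e1, e2⟩ := hz r hr hr'
    simp [W1, e1, e2, Fq]

lemma W2_integrable (h : Prof φ) (hY : IsEVSteady φ κ Y) {a : ℝ → ℝ} {r1 r2 : ℝ} (h1 : 0 < r1)
    (ha : ContinuousOn a (Ioi 0))
    (hz : ∀ r, 0 < r → r ∉ Icc r1 r2 → a r = 0) :
    IntegrableOn (W2 φ Y a) (Ioi 0) := by
  have c1 := DD_cont h hY
  have c2 := MM_cont h hY
  have c3 := SS_cont h hY
  have c4 := Yc hY
  have c5 : ContinuousOn (fun r => (2 * MM φ Y r + 1) * (a r * SS φ Y r) ^ 2 /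
      Real.sqrt (DD φ Y r)) (Ioi 0) :=
    ContinuousOn.div (by fun_prop) (by fun_prop) fun r hr =>
      (Real.sqrt_pos.2 (DD_pos hY hr)).ne'
  apply supp_integrable (r2 := r2) h1
  · unfold W2
    exact ContinuousOn.mul (by fun_prop) c5
  · intro r hr hr'
    simp [W2, hz r hr hr']

/-- The second variation along `a(|x|) x·v` is controlled by a radial integral. -/
lemma Aform_le (h : Prof φ) (hY : IsEVSteady φ κ Y) {yinf : ℝ} {a ra' : ℝ → ℝ} {ε r1 r2 : ℝ} (hε : 0 < ε) (h1 : 0 < r1)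
    (ha : ∀ r, 0 < r → HasDerivAt a (ra' r / r) r) (ha' : ContinuousOn ra' (Ioi 0))
    (hz : ∀ r, 0 < r → r ∉ Icc r1 r2 → a r = 0 ∧ ra' r = 0) :
    Aform (fun r => yinf - Y r) (lamOf φ Y) (Real.exp yinf) φ
      (fh (fun r => yinf - Y r) (lamOf φ Y) (Real.exp yinf) φ (hT a))
      (fun r => lamh (fun r => yinf - Y r) (lamOf φ Y) (Real.exp yinf) φ (hT a) (r • e1)) ≤
    (1 / 2) * Real.exp yinf * ∫ r in Ioi (0:ℝ), (W1 φ Y a ra' ε r - W2 φ Y a r) := by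
  have hac : ContinuousOn a (Ioi 0) := fun r hr => (ha r hr).continuousAt.continuousWithinAt
  have i1 := W1_integrable (ε := ε) h hY h1 hac ha' hz
  have i2 := W2_integrable h hY h1 hac fun r hr hr' => (hz r hr hr').1
  rw [integral_sub i1 i2]
  have hsecond : ∫ r in Ioi (0 : ℝ),
      Real.exp (yinf - Y r - lamOf φ Y r) * (2 * r * deriv (fun r => yinf - Y r) r + 1) *
      (lamh (fun r => yinf - Y r) (lamOf φ Y) (Real.exp yinf) φ (hT a) (r • e1)) ^ 2
      = Real.exp yinf * ∫ r in Ioi (0:ℝ), W2 φ Y a r := by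
    rw [← integral_const_mul]
    apply setIntegral_congr_fun measurableSet_Ioi
    intro r hr
    have hr : 0 < r := hr
    simp only
    have hn : ‖r • e1‖ = r := by
      rw [norm_smul, show e1 = ei 0 from rfl, ei_norm, mul_one, Real.norm_of_nonneg hr.le]
    have hne : r • e1 ≠ 0 := by rw [← norm_ne_zero_iff, hn]; exact hr.ne'
    rw [lamh_formula h hY hne, hn, ((Y_deriv hY hr).const_sub yinf).deriv,
      show yinf - Y r - lamOf φ Y r = yinf + (-Y r) + (-lamOf φ Y r) by ring, Real.exp_add,
      Real.exp_add, exp_neg_lam hY hr]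
    have hD := DD_pos hY hr
    have hsD := Real.sqrt_pos.2 hD
    unfold W2
    field_simp
  have hfirst : ∫ z : V3 × V3, Real.exp (lamOf φ Y ‖z.1‖) *
      (fh (fun r => yinf - Y r) (lamOf φ Y) (Real.exp yinf) φ (hT a) z) ^ 2 /
        |phiE φ (Real.exp yinf) (Epart (fun r => yinf - Y r) z)|
      ≤ Real.exp yinf * ∫ r in Ioi (0:ℝ), W1 φ Y a ra' ε r := by
    set N : ℝ → ℝ := fun r => Real.exp yinf * ((4 * Real.pi)⁻¹ * ((r ^ 2)⁻¹ * W1 φ Y a ra' ε r))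
      with hNdef
    have hN0 : ∀ r, 0 ≤ N r := by
      intro r
      have := W1_nonneg (Y := Y) h a ra' hε r
      simp only [hNdef]; positivity
    have hNint : IntegrableOn (fun s => s ^ 2 * N s) (Ioi 0) := by
      have i3 : IntegrableOn (fun r => Real.exp yinf * ((4 * Real.pi)⁻¹ * W1 φ Y a ra' ε r))
        (Ioi 0) := (i1.const_mul _).const_mul _
      refine i3.congr_fun ?_ measurableSet_Ioi
      intro r hr
      have hr : 0 < r := hr
      simp only [hNdef]; field_simp
    have hNval : ∫ x : V3, N ‖x‖ = Real.exp yinf * ∫ r in Ioi (0:ℝ), W1 φ Y a ra' ε r := by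
      rw [integral_radial, ← integral_const_mul, ← integral_const_mul]
      apply setIntegral_congr_fun measurableSet_Ioi
      intro r hr
      have hr : 0 < r := hr
      simp only [hNdef]; field_simp
    rw [← hNval]
    refine fubini_le (B := fun z =>
      Real.exp (yinf - 2 * Y ‖z.1‖) * Real.sqrt (DD φ Y ‖z.1‖) * (1 + ε) * (Hm φ (Y ‖z.1‖) ‖z.2‖ *
      ((ra' ‖z.1‖ - a ‖z.1‖ * SS φ Y ‖z.1‖ / DD φ Y ‖z.1‖) * cosang (‖z.1‖⁻¹ • z.1) z.2 ^ 2
            + a ‖z.1‖ * (1 - MM φ Y ‖z.1‖)) ^ 2) +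
      Real.exp (yinf - 2 * Y ‖z.1‖) * Real.sqrt (DD φ Y ‖z.1‖) *
        ((1 + ε⁻¹) * (a ‖z.1‖ * MM φ Y ‖z.1‖) ^ 2)
      * deriv φ (1 - Real.exp (-Y ‖z.1‖) * jap z.2))
      ((integrable_radial N).2 hNint) (fun x => hN0 _) ?_ ?_ ?_
    · intro x hx
      simp only
      exact (v_integral h (Y ‖x‖) _ _ _ _ (unit_norm hx)).1
    · intro x hx
      have hr : 0 < ‖x‖ := norm_pos_iff.2 hx
      simp only
      rw [(v_integral h (Y ‖x‖) _ _ _ _ (unit_norm hx)).2]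
      have hm := mom0_le h (Y ‖x‖)
      have h3 := h.nonneg 1
      refine (add_le_add le_rfl (mul_le_mul_of_nonneg_left hm (by positivity))).trans (le_of_eq ?_)
      simp only [hNdef, W1, SS]
      generalize Fq _ _ = F
      generalize Real.sqrt (DD φ Y ‖x‖) = d
      generalize MM φ Y ‖x‖ = M
      generalize k2 φ (Y ‖x‖) = k
      generalize a ‖x‖ = A
      have e1 : Real.exp (yinf - 2 * Y ‖x‖) = Real.exp yinf * Real.exp (-Y ‖x‖) ^ 2 := by
        rw [← Real.exp_nat_mul, ← Real.exp_add]; congr 1; push_cast; ring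
      have e2 : Real.exp (4 * Y ‖x‖) = Real.exp (Y ‖x‖) ^ 4 := by
        rw [← Real.exp_nat_mul]; congr 1
      have e3 : Real.exp (-2 * Y ‖x‖) = Real.exp (-Y ‖x‖) ^ 2 := exp_neg_two _
      rw [e1, e2, e3, Real.exp_neg]
      have := Real.exp_pos (Y ‖x‖)
      field_simp
    · intro x hx v
      have hr : 0 < ‖x‖ := norm_pos_iff.2 hx
      have := integrand_le (yinf := yinf) h hY hε (v := v) hx (ha ‖x‖ hr)
      rw [mul_div_cancel₀ _ hr.ne'] at this
      exact this
  unfold Aform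
  rw [hsecond]
  linarith
end Abound

/-! ### The test function -/

/-- A fixed smooth bump, equal to `1` on `[1/4, 3/4]` and supported in `[0, 1]`. -/
def bump : ContDiffBump (1/2 : ℝ) := ⟨1/4, 1/2, by norm_num, by norm_num⟩

lemma bump_zero {t : ℝ} (ht : t ≤ 0 ∨ 1 ≤ t) : bump t = 0 := by
  apply bump.zero_of_le_dist
  show (1/2:ℝ) ≤ _
  rw [Real.dist_eq]
  rcases ht with ht | ht
  · rw [abs_of_neg (by linarith)]; linarith
  · rw [abs_of_pos (by linarith)]; linarith

lemma bump_one {t : ℝ} (h1 : 1/4 ≤ t) (h2 : t ≤ 3/4) : bump t = 1 := by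
  apply bump.one_of_mem_closedBall
  rw [Metric.mem_closedBall, Real.dist_eq]
  show _ ≤ (1/4:ℝ)
  rw [abs_le]; constructor <;> linarith

lemma bump_smooth : ContDiff ℝ 2 bump := bump.contDiff

lemma bump_deriv_zero {t : ℝ} (ht : t < 0 ∨ 1 < t) : deriv bump t = 0 := by
  have : bump =ᶠ[𝓝 t] fun _ => (0:ℝ) := by
    rcases ht with ht | ht
    · filter_upwards [Iio_mem_nhds ht] with s hs
      exact bump_zero (Or.inl (le_of_lt hs))
    · filter_upwards [Ioi_mem_nhds ht] with s hs
      exact bump_zero (Or.inr (le_of_lt hs))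
  rw [this.deriv_eq]; simp

lemma bump_deriv_cont : Continuous (deriv bump) := bump_smooth.continuous_deriv (by norm_num)

lemma bump_deriv_bdd : ∃ C : ℝ, 0 < C ∧ ∀ t, |deriv bump t| ≤ C := by
  obtain ⟨C, hC⟩ := (isCompact_Icc (a := (0:ℝ)) (b := 1)).exists_bound_of_continuousOn
    bump_deriv_cont.continuousOn
  refine ⟨max C 1, by positivity, fun t => ?_⟩
  by_cases ht : t ∈ Icc (0:ℝ) 1
  · exact (hC t ht).trans (le_max_left _ _)
  · have : t < 0 ∨ 1 < t := by
      rw [mem_Icc, not_and_or, not_le, not_le] at ht; exact ht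
    rw [bump_deriv_zero this, abs_zero]; positivity

/-- Logarithmic cutoff to `[r₁, r₁ e^L]`. -/
def chi (L r1 r : ℝ) : ℝ := bump (Real.log (r / r1) / L)

/-- `r χ'(r)`. -/
def chid (L r1 r : ℝ) : ℝ := deriv bump (Real.log (r / r1) / L) / L

/-- The radial weight `r^{-3/2} e^{-3y/2}` of the test function, before cutoff. -/
def a0 (Y : ℝ → ℝ) (r : ℝ) : ℝ := Real.exp (-(3/2) * (Real.log r + Y r))

/-- The radial factor of the test function. -/
def aT (Y : ℝ → ℝ) (L r1 r : ℝ) : ℝ := a0 Y r * chi L r1 r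

section test
variable {φ : ℝ → ℝ} {κ : ℝ} {Y : ℝ → ℝ} {L r1 : ℝ}

/-- `r a'(r)` for the test function. -/
def raT (φ Y : ℝ → ℝ) (L r1 r : ℝ) : ℝ :=
  a0 Y r * ((-(3/2) + 3/2 * MM φ Y r) * chi L r1 r + chid L r1 r)

lemma chi_deriv (hr1 : 0 < r1) {r : ℝ} (hr : 0 < r) : HasDerivAt (chi L r1) (chid L r1 r / r) r := by
  have h1 : HasDerivAt (fun r => Real.log (r / r1) / L) (1 / r / L) r := by
    refine ((((hasDerivAt_id r).div_const r1).log (by simp only [id]; positivity)).div_const L).congr_deriv ?_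
    simp only [id]; field_simp
  have h2 : HasDerivAt bump (deriv bump (Real.log (r / r1) / L)) (Real.log (r / r1) / L) :=
    (bump_smooth.differentiable (by norm_num) _).hasDerivAt
  refine (h2.comp r h1).congr_deriv ?_
  unfold chid; ring

lemma a0_deriv (hY : IsEVSteady φ κ Y) {r : ℝ} (hr : 0 < r) :
    HasDerivAt (a0 Y) (a0 Y r * (-(3/2) + 3/2 * MM φ Y r) / r) r := by
  have h1 := ((((Real.hasDerivAt_log hr.ne').add (Y_deriv hY hr)).const_mul (-(3/2))).exp)
  refine h1.congr_deriv ?_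
  unfold a0
  simp only [Pi.add_apply]
  field_simp; ring

lemma aT_deriv (hY : IsEVSteady φ κ Y) (hr1 : 0 < r1) {r : ℝ} (hr : 0 < r) : HasDerivAt (aT Y L r1) (raT φ Y L r1 r / r) r := by
  refine ((a0_deriv hY hr).mul (chi_deriv (L := L) hr1 hr)).congr_deriv ?_
  unfold raT; ring

lemma chi_zero_out (hL : 0 < L) (hr1 : 0 < r1) {r : ℝ} (hr : 0 < r) (hr' : r ∉ Icc r1 (r1 * Real.exp L)) :
    chi L r1 r = 0 ∧ chid L r1 r = 0 := by
  have : Real.log (r / r1) / L < 0 ∨ 1 < Real.log (r / r1) / L := by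
    rw [mem_Icc, not_and_or, not_le, not_le] at hr'
    rcases hr' with h1 | h1
    · left
      apply div_neg_of_neg_of_pos _ hL
      exact Real.log_neg (by positivity) ((div_lt_one hr1).2 h1)
    · right
      rw [lt_div_iff₀ hL, one_mul, Real.lt_log_iff_exp_lt (by positivity), lt_div_iff₀ hr1]
      linarith
  constructor
  · exact bump_zero (this.imp le_of_lt le_of_lt)
  · unfold chid; rw [bump_deriv_zero this, zero_div]

lemma chi_zero_near (hL : 0 < L) (hr1 : 0 < r1) {r : ℝ} (hr : 0 ≤ r) (hr' : r < r1) : chi L r1 r = 0 := by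
  rcases hr.eq_or_lt with rfl | h0
  · unfold chi; simp [bump_zero]
  · exact (chi_zero_out hL hr1 h0 fun h => absurd h.1 (not_le.2 hr')).1

lemma Y_c2 (hY : IsEVSteady φ κ Y) {r : ℝ} (hr : 0 < r) : ContDiffAt ℝ 2 Y r :=
  (hY.1 r hr.le).contDiffAt (Ici_mem_nhds hr)

lemma hT_smooth (hY : IsEVSteady φ κ Y) (hL : 0 < L) (hr1 : 0 < r1) : ContDiff ℝ 2 (hT (aT Y L r1)) := by
  rw [contDiff_iff_contDiffAt]
  rintro ⟨x, v⟩
  rcases eq_or_ne x 0 with rfl | hx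
  · have : hT (aT Y L r1) =ᶠ[𝓝 ((0:V3), v)] fun _ => (0:ℝ) := by
      have hc : ContinuousAt (fun z : V3 × V3 => ‖z.1‖) ((0:V3), v) := by fun_prop
      filter_upwards [hc.eventually_lt continuousAt_const (by simpa using hr1)] with z hz
      unfold hT aT
      rw [chi_zero_near hL hr1 (norm_nonneg _) hz]; ring
    exact contDiffAt_const.congr_of_eventuallyEq this
  · have hr : 0 < ‖x‖ := norm_pos_iff.2 hx
    have h1 : ContDiffAt ℝ 2 (aT Y L r1) ‖x‖ := by
      have hy := Y_c2 hY hr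
      have hl : ContDiffAt ℝ 2 Real.log ‖x‖ := Real.contDiffAt_log.2 hr.ne'
      have hl2 : ContDiffAt ℝ 2 (fun r : ℝ => Real.log (r / r1)) ‖x‖ :=
        (contDiffAt_id.div_const r1).log (by simp; exact ⟨hx, hr1.ne'⟩)
      have hb : ContDiffAt ℝ 2 (chi L r1) ‖x‖ :=
        (bump_smooth.contDiffAt).comp ‖x‖ (hl2.div_const L)
      unfold aT a0
      exact (contDiffAt_const.mul (hl.add hy)).exp.mul hb
    have h2 : ContDiffAt ℝ 2 (fun z : V3 × V3 => ‖z.1‖) (x, v) :=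
      (contDiffAt_fst).norm ℝ hx
    exact (h1.comp (x, v) h2).mul (contDiffAt_fst.inner ℝ contDiffAt_snd)

lemma hT_sph (a : ℝ → ℝ) : SphSym (hT a) := by
  intro A _ x v
  simp [hT]

lemma hT_odd (a : ℝ → ℝ) (x v : V3) : hT a (x, -v) = -hT a (x, v) := by
  simp [hT]

lemma raT_cont (h : Prof φ) (hY : IsEVSteady φ κ Y) (hr1 : 0 < r1) : ContinuousOn (raT φ Y L r1) (Ioi 0) := by
  have c1 := MM_cont h hY
  have c2 : ContinuousOn (a0 Y) (Ioi 0) := fun r hr =>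
    (a0_deriv hY hr).continuousAt.continuousWithinAt
  have c3 : ContinuousOn (chi L r1) (Ioi 0) := fun r hr =>
    (chi_deriv hr1 hr).continuousAt.continuousWithinAt
  have c4 : ContinuousOn (chid L r1) (Ioi 0) := by
    unfold chid
    refine ContinuousOn.div_const (bump_deriv_cont.comp_continuousOn ?_) L
    refine ContinuousOn.div_const (ContinuousOn.log (by fun_prop) ?_) L
    intro r hr
    have : 0 < r := hr
    positivity
  unfold raT
  fun_prop
end test

/-! ### Negativity of the coefficient of `χ²` -/

/-- A polynomial majorant of `(1-2n)² Phi 1 1 1 0 0 n q`. It results from inserting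
`√(1-2n) ≤ 1 - n - n²/2` and `1/√(1-2n) ≥ 1 + n + 3n²/2`. -/
def Gpol (n q : ℝ) : ℝ :=
  4 * (1 - n - n ^ 2 / 2) * Fq (-3/2 + 9/2 * n - 5/6 * q) (1 - 3 * n - q / 3)
    - 16/9 * q * (1 + n + 3/2 * n ^ 2) * (1 - 2 * n) * (1 + 2 * q / 3)
    + (1 - 2 * n) ^ 2 * (-2 + 7/2 * (q - n)) + 4 * (1 - 2 * n) * (n + q / 3)

/-- Bernstein polynomials are nonnegative on `[0,1]`. Below, a polynomial is shown to have a sign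
on an interval by expanding it in this basis after an affine substitution. -/
lemma bern_pos {t : ℝ} (h0 : 0 ≤ t) (h1 : t ≤ 1) (i j : ℕ) : 0 ≤ t ^ i * (1 - t) ^ j :=
  mul_nonneg (pow_nonneg h0 _) (pow_nonneg (by linarith) _)

lemma Gpol_zero {n : ℝ} (h0 : 0 ≤ n) (h1 : n ≤ 71/250) : Gpol n 0 ≤ -(1/1000) := by
  obtain ⟨t, rfl⟩ : ∃ t, n = 71/250 * t := ⟨250/71 * n, by ring⟩
  have t0 : 0 ≤ t := by linarith
  have t1 : t ≤ 1 := by linarith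
  have b := bern_pos t0 t1
  unfold Gpol Fq
  linarith [b 0 4, b 1 3, b 2 2, b 3 1, b 4 0]

lemma Gpol_top {n : ℝ} (h0 : 0 ≤ n) (h1 : n ≤ 71/250) :
    Gpol n (3 * n - 25 * n ^ 3 + 1/200) ≤ -(1/1000) := by
  obtain ⟨t, rfl⟩ : ∃ t, n = 71/250 * t := ⟨250/71 * n, by ring⟩
  have t0 : 0 ≤ t := by linarith
  have t1 : t ≤ 1 := by linarith
  have b := bern_pos t0 t1
  unfold Gpol Fq
  linarith [b 0 9, b 1 8, b 2 7, b 3 6, b 4 5, b 5 4, b 6 3, b 7 2, b 8 1, b 9 0]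

/-- The coefficient of `q²` in `Gpol n q` is nonnegative, so `Gpol` is convex in `q`. -/
lemma Gpol_A {n : ℝ} (h0 : 0 ≤ n) (h1 : n ≤ 71/250) :
    0 ≤ 4 * (1 - n - n ^ 2 / 2) * (47/108) - 32/27 * (1 + n + 3/2 * n ^ 2) * (1 - 2 * n) := by
  obtain ⟨t, rfl⟩ : ∃ t, n = 71/250 * t := ⟨250/71 * n, by ring⟩
  have t0 : 0 ≤ t := by linarith
  have t1 : t ≤ 1 := by linarith
  have b := bern_pos t0 t1
  linarith [b 0 3, b 1 2, b 2 1, b 3 0]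

/-- By convexity in `q`, the bound on `Gpol` has to be checked only at the two ends of the range
of `q`. -/
lemma Gpol_le {n q : ℝ} (h0 : 0 ≤ n) (h1 : n ≤ 71/250) (hq : 0 ≤ q)
    (hq' : q ≤ 3 * n - 25 * n ^ 3 + 1/200) : Gpol n q ≤ -(1/1000) := by
  set Q := 3 * n - 25 * n ^ 3 + 1/200 with hQ
  have hQp : 0 < Q := by
    have : n ^ 2 ≤ (71/250) ^ 2 := pow_le_pow_left₀ h0 h1 2
    have h3 : n * n ^ 2 ≤ n * (71/250) ^ 2 := mul_le_mul_of_nonneg_left this h0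
    rw [hQ]; nlinarith
  -- the defect of the chord from `0` to `Q`, up to the factor `Q`
  have e : Q * Gpol n q = (Q - q) * Gpol n 0 + q * Gpol n Q
      - q * Q * (Q - q) * (4 * (1 - n - n ^ 2 / 2) * (47/108)
        - 32/27 * (1 + n + 3/2 * n ^ 2) * (1 - 2 * n)) := by
    unfold Gpol Fq; ring
  have a := Gpol_A h0 h1
  have z := Gpol_zero h0 h1
  have t := Gpol_top h0 h1
  rw [← hQ] at t
  have w1 : 0 ≤ q * Q * (Q - q) := mul_nonneg (mul_nonneg hq hQp.le) (by linarith)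
  have w2 := mul_nonneg w1 a
  have w3 := mul_le_mul_of_nonneg_left z (sub_nonneg.2 hq')
  have w4 := mul_le_mul_of_nonneg_left t hq
  have : Q * Gpol n q ≤ Q * (-(1/1000)) := by rw [e]; linarith
  exact le_of_mul_le_mul_left this hQp

/-- The coefficient of `χ²` in the upper bound for `(r/4π)(W1 - W2) + rU'`, where `U = V χ²` is the
correction. Here `n = m/r`, `q = 4πr²e^{4y}`; the arguments `p`, `s`, `g` are the ratios of the
pressure, of the second moment of `φ'` and of the density to their ultrarelativistic values, `d` is
the factor of the remainder from the zeroth moment of `φ'`, and `ε` is the parameter of Young's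
inequality. The ultrarelativistic limit is `(p, s, g, d, ε) = (1, 1, 1, 0, 0)`. -/
def Phi (p s g d ε n q : ℝ) : ℝ :=
  √(1 - 2 * n) * ((1 + ε) ^ 2 * (4 * s * Fq (-(3/2) + 3/2 * ((n + p * q / 3) / (1 - 2 * n))
      - 4 * s * q / 3 / (1 - 2 * n)) (1 - (n + p * q / 3) / (1 - 2 * n)))
      + ((n + p * q / 3) / (1 - 2 * n)) ^ 2 * d)
    - 16/9 * q * s ^ 2 * (2 * ((n + p * q / 3) / (1 - 2 * n)) + 1) / √(1 - 2 * n)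
    - (2 - 4 * ((n + p * q / 3) / (1 - 2 * n))) + 7/2 * (g * q - n) + ε

lemma Phi_lim {n q : ℝ} (h0 : 0 ≤ n) (h1 : n ≤ 71/250) (hq : 0 ≤ q)
    (hq' : q ≤ 3 * n - 25 * n ^ 3 + 1/200) : Phi 1 1 1 0 0 n q ≤ -(1/1000) := by
  have hD : 0 < 1 - 2 * n := by linarith
  have hs : 0 < √(1 - 2 * n) := Real.sqrt_pos.2 hD
  have hss := Real.sq_sqrt hD.le
  have hU : √(1 - 2 * n) ≤ 1 - n - n ^ 2 / 2 := by
    apply Real.sqrt_le_iff.2 ⟨by nlinarith, ?_⟩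
    nlinarith [pow_nonneg h0 3, pow_nonneg h0 4]
  have hL : 1 + n + 3/2 * n ^ 2 ≤ 1 / √(1 - 2 * n) := by
    rw [le_div_iff₀ hs]
    have : (1 + n + 3/2 * n ^ 2) * √(1 - 2 * n) ≤ (1 + n + 3/2 * n ^ 2) * (1 - n - n ^ 2 / 2) :=
      mul_le_mul_of_nonneg_left hU (by positivity)
    nlinarith [pow_nonneg h0 3, pow_nonneg h0 4]
  have hF : ∀ b z, 0 ≤ Fq b z := Fq_nonneg
  have e : (1 - 2 * n) ^ 2 * Phi 1 1 1 0 0 n q =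
      4 * √(1 - 2 * n) * Fq (-3/2 + 9/2 * n - 5/6 * q) (1 - 3 * n - q / 3)
    - 16/9 * q * (1 / √(1 - 2 * n)) * (1 - 2 * n) * (1 + 2 * q / 3)
    + (1 - 2 * n) ^ 2 * (-2 + 7/2 * (q - n)) + 4 * (1 - 2 * n) * (n + q / 3) := by
    unfold Phi Fq
    field_simp
    ring
  have : (1 - 2 * n) ^ 2 * Phi 1 1 1 0 0 n q ≤ Gpol n q := by
    rw [e]; unfold Gpol
    have a1 := mul_le_mul_of_nonneg_right hU (mul_nonneg (by norm_num : (0:ℝ) ≤ 4) (hF (-3/2 + 9/2 * n - 5/6 * q) (1 - 3 * n - q / 3)))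
    have a2 := mul_le_mul_of_nonneg_left hL (by positivity : 0 ≤ 16/9 * q * (1 - 2 * n) * (1 + 2 * q / 3))
    linarith
  have g := Gpol_le h0 h1 hq hq'
  have D1 : (1 - 2 * n) ^ 2 ≤ 1 := by nlinarith
  by_contra hc
  have := mul_lt_mul_of_pos_left (not_le.1 hc) (pow_pos hD 2)
  linarith

/-- The region of the values of `(m/r, 4πr²e^{4y})` to which the solution is confined. -/
def Kset : Set (ℝ × ℝ) :=
  {x | 0 ≤ x.1 ∧ x.1 ≤ 71/250 ∧ 0 ≤ x.2 ∧ x.2 ≤ 3 * x.1 - 25 * x.1 ^ 3 + 1/200}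

lemma Kset_compact : IsCompact Kset := by
  have : Kset ⊆ Icc (0:ℝ) 1 ×ˢ Icc (0:ℝ) 1 := by
    rintro ⟨n, q⟩ ⟨a, b, c, d⟩
    simp only [] at a b c d
    exact ⟨⟨a, by simp only []; linarith⟩, ⟨c, by simp only []; nlinarith [pow_nonneg a 3]⟩⟩
  refine (isCompact_Icc.prod isCompact_Icc).of_isClosed_subset ?_ this
  have c1 : Continuous fun x : ℝ × ℝ => x.1 := continuous_fst
  have c2 : Continuous fun x : ℝ × ℝ => x.2 := continuous_snd
  exact (isClosed_le continuous_const c1).inter ((isClosed_le c1 continuous_const).inter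
    ((isClosed_le continuous_const c2).inter (isClosed_le c2 (by fun_prop))))

/-- Negativity in the ultrarelativistic limit persists, uniformly on the compact region `Kset`,
under small deviations. -/
lemma Phi_tube : ∃ τ : ℝ, 0 < τ ∧ τ ≤ 1 ∧ ∀ p s g d ε n q, |p - 1| ≤ τ → |s - 1| ≤ τ → |g - 1| ≤ τ →
    |d| ≤ τ → |ε| ≤ τ → 0 ≤ n → n ≤ 71/250 → 0 ≤ q → q ≤ 3 * n - 25 * n ^ 3 + 1/200 →
    Phi p s g d ε n q ≤ -(1/2000) := by
  have key := IsCompact.eventually_forall_of_forall_eventually (x₀ := ((1,1,1,0,0) : ℝ × ℝ × ℝ × ℝ × ℝ))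
    Kset_compact (P := fun x y => Phi x.1 x.2.1 x.2.2.1 x.2.2.2.1 x.2.2.2.2 y.1 y.2 < -(1/2000)) ?_
  · obtain ⟨r, hr, hb⟩ := Metric.eventually_nhds_iff.1 key
    refine ⟨min (r / 2) 1, by positivity, min_le_right _ _, ?_⟩
    intro p s g d ε n q hp hs hg hd he h0 h1 h2 h3
    refine (hb (y := (p, s, g, d, ε)) ?_ (n, q) ⟨h0, h1, h2, h3⟩).le
    have : min (r / 2) 1 < r := (min_le_left _ _).trans_lt (by linarith)
    simp only [Prod.dist_eq, Real.dist_eq, max_lt_iff, sub_zero]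
    exact ⟨by linarith, by linarith, by linarith, by linarith, by linarith⟩
  · rintro ⟨n, q⟩ ⟨h0, h1, h2, h3⟩
    simp only [] at h0 h1 h2 h3
    have hD : 0 < 1 - 2 * n := by linarith
    have hlt : Phi 1 1 1 0 0 n q < -(1/2000) := (Phi_lim h0 h1 h2 h3).trans_lt (by norm_num)
    have hc : ContinuousAt (fun z : (ℝ × ℝ × ℝ × ℝ × ℝ) × (ℝ × ℝ) =>
        Phi z.1.1 z.1.2.1 z.1.2.2.1 z.1.2.2.2.1 z.1.2.2.2.2 z.2.1 z.2.2) ((1,1,1,0,0), (n, q)) := by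
      unfold Phi Fq
      have : (1 - 2 * n) ≠ 0 := hD.ne'
      have h' : √(1 - 2 * n) ≠ 0 := (Real.sqrt_pos.2 hD).ne'
      fun_prop (disch := assumption)
    exact hc.eventually_lt continuousAt_const hlt

/-! ### The radial integrand corrected by a total derivative -/

/-- The coefficient of `(r χ')²` in the bound for the radial integrand, when `|V| ≤ VB`. -/
def K1 (ε VB : ℝ) : ℝ := (1 + ε) * (1 + ε⁻¹) * (4/5) + VB ^ 2 / ε

lemma Fq_add_le {ε : ℝ} (hε : 0 < ε) (b c z : ℝ) :
    Fq (b + c) z ≤ (1 + ε) * Fq b z + (1 + ε⁻¹) * (c ^ 2 / 5) := by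
  have h1 : (1 + ε) * Fq b z + (1 + ε⁻¹) * (c ^ 2 / 5) - Fq (b + c) z
      = ε⁻¹ * Fq (ε * b - c) (ε * z) := by
    unfold Fq; field_simp; ring
  have h2 : 0 ≤ ε⁻¹ * Fq (ε * b - c) (ε * z) := mul_nonneg (by positivity) (Fq_nonneg _ _)
  linarith

/-- Young's inequality separates the terms with `X = χ` from those with `c = r χ'`. -/
lemma Gamma_le {p s g d ε n q X c V VB : ℝ} (hε : 0 < ε) (hn0 : 0 ≤ n)
    (hs0 : 0 ≤ s) (hs : s ≤ 1) (hV : |V| ≤ VB) :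
    √(1 - 2 * n) * ((1 + ε) * (4 * s * Fq ((-(3/2) + 3/2 * ((n + p * q / 3) / (1 - 2 * n))
      - 4 * s * q / 3 / (1 - 2 * n)) * X + c) ((1 - (n + p * q / 3) / (1 - 2 * n)) * X))
      + ((n + p * q / 3) / (1 - 2 * n)) ^ 2 * d * X ^ 2)
    - 16/9 * q * s ^ 2 * (2 * ((n + p * q / 3) / (1 - 2 * n)) + 1) * X ^ 2 / √(1 - 2 * n)
    + ((-(2 - 4 * ((n + p * q / 3) / (1 - 2 * n))) + 7/2 * (g * q - n)) * X ^ 2 + V * (2 * X * c))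
    ≤ X ^ 2 * Phi p s g d ε n q + K1 ε VB * c ^ 2 := by
  set M := (n + p * q / 3) / (1 - 2 * n)
  set b := -(3/2) + 3/2 * M - 4 * s * q / 3 / (1 - 2 * n) with hb
  have hr0 : 0 ≤ √(1 - 2 * n) := Real.sqrt_nonneg _
  have hr1 : √(1 - 2 * n) ≤ 1 := Real.sqrt_le_one.2 (by linarith)
  have hF := Fq_add_le hε (b * X) c ((1 - M) * X)
  have hFX : Fq (b * X) ((1 - M) * X) = X ^ 2 * Fq b (1 - M) := by unfold Fq; ring
  rw [hFX] at hF
  have w : 0 ≤ √(1 - 2 * n) * (1 + ε) * (4 * s) := by positivity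
  have t1 := mul_le_mul_of_nonneg_left hF w
  have t2 : √(1 - 2 * n) * s ≤ 1 := mul_le_one₀ hr1 hs0 hs
  have t3 : 0 ≤ (1 + ε) * (1 + ε⁻¹) * (4/5) * c ^ 2 := by positivity
  have t4 := mul_le_mul_of_nonneg_right t2 t3
  have hV2 : V ^ 2 ≤ VB ^ 2 := by
    rw [← sq_abs V]; exact pow_le_pow_left₀ (abs_nonneg _) hV 2
  have t5 : V * (2 * X * c) ≤ ε * X ^ 2 + VB ^ 2 / ε * c ^ 2 := by
    have e1 : ε * X ^ 2 + V ^ 2 / ε * c ^ 2 - V * (2 * X * c) = (ε * X - V * c) ^ 2 / ε := by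
      field_simp; ring
    have e2 : 0 ≤ (ε * X - V * c) ^ 2 / ε := by positivity
    have e3 : V ^ 2 / ε * c ^ 2 ≤ VB ^ 2 / ε * c ^ 2 := by gcongr
    linarith
  have e : X ^ 2 * Phi p s g d ε n q = √(1 - 2 * n) * (1 + ε) * (4 * s) * ((1 + ε) * (X ^ 2 * Fq b (1 - M)))
      + √(1 - 2 * n) * (M ^ 2 * d * X ^ 2)
      - 16/9 * q * s ^ 2 * (2 * M + 1) * X ^ 2 / √(1 - 2 * n)
      + (-(2 - 4 * M) + 7/2 * (g * q - n)) * X ^ 2 + ε * X ^ 2 := by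
    unfold Phi; rw [hb]; ring
  rw [e]; unfold K1
  linarith

/-- The potential `V = -log q + 7n/2`. The derivative of `V χ²` is added to the radial integrand
without changing its integral. -/
def VV (φ Y : ℝ → ℝ) (r : ℝ) : ℝ :=
  -(Real.log (4 * Real.pi) + 2 * Real.log r + 4 * Y r) + 7/2 * nn φ Y r

/-- The scale invariant variable `4πr²e^{4y}`. -/
def qq (Y : ℝ → ℝ) (r : ℝ) : ℝ := 4 * Real.pi * r ^ 2 * Real.exp (4 * Y r)

/-- The density relative to its ultrarelativistic value `e^{4y}`. -/
def gg (φ Y : ℝ → ℝ) (r : ℝ) : ℝ := gEV φ (Y r) * Real.exp (-(4 * Y r))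
/-- The pressure relative to its ultrarelativistic value `e^{4y}/3`. -/
def pp (φ Y : ℝ → ℝ) (r : ℝ) : ℝ := 3 * hEV φ (Y r) * Real.exp (-(4 * Y r))

section
variable {φ Y : ℝ → ℝ} {κ yinf : ℝ}

lemma gg_qq (r : ℝ) : 4 * Real.pi * r ^ 2 * gEV φ (Y r) = gg φ Y r * qq Y r := by
  unfold gg qq
  have : Real.exp (-(4 * Y r)) * Real.exp (4 * Y r) = 1 := by rw [← Real.exp_add]; simp
  linear_combination (-(4 * Real.pi * r ^ 2 * gEV φ (Y r))) * this

lemma pp_qq (r : ℝ) : 4 * Real.pi * r ^ 2 * hEV φ (Y r) = pp φ Y r * qq Y r / 3 := by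
  unfold pp qq
  have : Real.exp (-(4 * Y r)) * Real.exp (4 * Y r) = 1 := by rw [← Real.exp_add]; simp
  linear_combination (-(4 * Real.pi * r ^ 2 * hEV φ (Y r))) * this

lemma MM_eq (r : ℝ) : MM φ Y r = (nn φ Y r + pp φ Y r * qq Y r / 3) / (1 - 2 * nn φ Y r) := by
  unfold MM DD; rw [pp_qq]

end

section
variable {φ Y : ℝ → ℝ} {κ L r1 : ℝ}

/-- With the weight `a0` the radial densities become functions of scale invariant quantities,
times `1/r`. -/
lemma a0_sq {r : ℝ} (hr : 0 < r) :
    Real.exp (-Y r) * a0 Y r ^ 2 * qq Y r = 4 * Real.pi / r := by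
  have e1 : a0 Y r ^ 2 = Real.exp (-(3 * Y r)) / r ^ 3 := by
    unfold a0
    rw [← Real.exp_nat_mul, eq_div_iff (by positivity)]
    have : r ^ 3 = Real.exp (3 * Real.log r) := by
      rw [← Real.exp_log (pow_pos hr 3), Real.log_pow]; norm_num
    rw [this, ← Real.exp_add]; congr 1; push_cast; ring
  have e2 : Real.exp (-Y r) * Real.exp (-(3 * Y r)) * Real.exp (4 * Y r) = 1 := by
    rw [← Real.exp_add, ← Real.exp_add, ← Real.exp_zero]; congr 1; ring
  rw [e1]; unfold qq
  generalize Real.exp (-Y r) = A at *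
  generalize Real.exp (-(3 * Y r)) = B at *
  generalize Real.exp (4 * Y r) = C at *
  field_simp
  linear_combination e2

lemma W_eq (ε : ℝ) {r : ℝ} (hr : 0 < r) :
    W1 φ Y (aT Y L r1) (raT φ Y L r1) ε r - W2 φ Y (aT Y L r1) r = 4 * Real.pi / r *
      (√(1 - 2 * nn φ Y r) * ((1 + ε) * (4 * (k2 φ (Y r) / 4) * Fq ((-(3/2) + 3/2 * MM φ Y r
      - 4 * (k2 φ (Y r) / 4) * qq Y r / 3 / (1 - 2 * nn φ Y r)) * chi L r1 r + chid L r1 r)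
        ((1 - MM φ Y r) * chi L r1 r))
      + MM φ Y r ^ 2 * ((1 + ε⁻¹) * (4 * Real.pi * φ 1 * Real.exp (-2 * Y r))) * chi L r1 r ^ 2)
    - 16/9 * qq Y r * (k2 φ (Y r) / 4) ^ 2 * (2 * MM φ Y r + 1) * chi L r1 r ^ 2
        / √(1 - 2 * nn φ Y r)) := by
  rw [← a0_sq (Y := Y) hr]
  have hS : SS φ Y r = qq Y r * k2 φ (Y r) / 3 := rfl
  have hq : 4 * Real.pi * r ^ 2 * Real.exp (4 * Y r) = qq Y r := rfl
  unfold W1 W2 aT raT Fq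
  rw [hS, hq]
  unfold DD
  ring

lemma U_deriv (h : Prof φ) (hY : IsEVSteady φ κ Y) (hr1 : 0 < r1) {r : ℝ} (hr : 0 < r) :
    HasDerivAt (fun r => VV φ Y r * chi L r1 r ^ 2)
      (((-(2 - 4 * MM φ Y r) + 7/2 * (gg φ Y r * qq Y r - nn φ Y r)) * chi L r1 r ^ 2
        + VV φ Y r * (2 * chi L r1 r * chid L r1 r)) / r) r := by
  have d1 := ((Real.hasDerivAt_log hr.ne').const_mul 2).const_add (Real.log (4 * Real.pi))
  have d2 := ((d1.add ((Y_deriv hY hr).const_mul 4)).neg).add ((nn_deriv h hY hr).const_mul (7/2))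
  have d3 := d2.mul ((chi_deriv (L := L) hr1 hr).pow 2)
  refine d3.congr_deriv ?_
  rw [gg_qq]
  simp only [Pi.add_apply, Pi.neg_apply, Pi.pow_apply, VV]
  field_simp
  ring

/-- The radial integrand plus the correction `4π (V χ²)'` is bounded by the `χ²` term with
coefficient `Phi` and the cutoff term. -/
lemma W_le (h : Prof φ) {ε VB r : ℝ} (hε : 0 < ε) (hr : 0 < r)
    (hV : |VV φ Y r| ≤ VB) :
    W1 φ Y (aT Y L r1) (raT φ Y L r1) ε r - W2 φ Y (aT Y L r1) r ≤ 4 * Real.pi / r *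
      (chi L r1 r ^ 2 * Phi (pp φ Y r) (k2 φ (Y r) / 4) (gg φ Y r)
        ((1 + ε⁻¹) * (4 * Real.pi * φ 1 * Real.exp (-2 * Y r))) ε (nn φ Y r) (qq Y r)
        + K1 ε VB * chid L r1 r ^ 2) -
      4 * Real.pi * (((-(2 - 4 * MM φ Y r) + 7/2 * (gg φ Y r * qq Y r - nn φ Y r)) * chi L r1 r ^ 2
        + VV φ Y r * (2 * chi L r1 r * chid L r1 r)) / r) := by
  rw [W_eq ε hr]
  have hk0 : 0 ≤ k2 φ (Y r) / 4 := by
    unfold k2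
    refine div_nonneg (mul_nonneg (by positivity) ?_) (by norm_num)
    apply setIntegral_nonneg measurableSet_Ioo
    intro η hη
    have h1 : 0 ≤ 1 - η := by linarith [hη.2]
    have := h.d_nonneg η
    have := Tf_nonneg (Y r) η
    positivity
  have hk1 : k2 φ (Y r) / 4 ≤ 1 := by linarith [k2_le h (Y r)]
  have key := Gamma_le (p := pp φ Y r) (s := k2 φ (Y r) / 4) (g := gg φ Y r)
    (d := (1 + ε⁻¹) * (4 * Real.pi * φ 1 * Real.exp (-2 * Y r))) (ε := ε) (n := nn φ Y r)
    (q := qq Y r) (X := chi L r1 r) (c := chid L r1 r) (V := VV φ Y r) (VB := VB)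
    hε (nn_nonneg h hr) hk0 hk1 hV
  rw [← MM_eq] at key
  have hp : 0 < 4 * Real.pi / r := by positivity
  have k3 := mul_le_mul_of_nonneg_left key hp.le
  linear_combination k3
end

/-! ### Barriers for `m/r` and `4πr²e^{4y}` -/

/-- A function that starts nonpositive and is strictly decreasing at each of its zeros stays
nonpositive. -/
lemma barrier {f f' : ℝ → ℝ} {a b : ℝ} (hf : ∀ r ∈ Icc a b, HasDerivAt f (f' r) r)
    (h0 : f a ≤ 0) (hb : ∀ r ∈ Ico a b, f r = 0 → f' r < 0) : ∀ r ∈ Icc a b, f r ≤ 0 := by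
  intro r hr
  exact image_le_of_deriv_right_lt_deriv_boundary' (B := fun _ => 0) (B' := fun _ => 0)
    (fun x hx => (hf x hx).continuousAt.continuousWithinAt)
    (fun x hx => (hf x ⟨hx.1, hx.2.le⟩).hasDerivWithinAt) h0 continuousOn_const
    (fun x _ => hasDerivWithinAt_const x _ _) (fun x hx h => hb x hx h) hr

/-- The inequality behind `barrier1_alg` where the bound `kn - 25n³` is nondecreasing in `n`; the
coefficient `1 - 6n + 50n³/3` comes from `2 - 4M` with `q = 3n - 25n³`. -/
lemma poly_A {k n : ℝ} (hk : 3 ≤ k) (hk' : k ≤ 3 + 4/1000) (hn : 0 < n) (hn' : 75 * n ^ 2 ≤ k) :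
    2 * (k - 25 * n ^ 2) * (1 - 6 * n + 50/3 * n ^ 3) <
      (k - 75 * n ^ 2) * (2 - 25 * n ^ 2) * (1 - 2 * n) := by
  have h1 : n ≤ 1002/5000 := by nlinarith
  have h2 : 0 < 24 - 175 * n + 50 * n ^ 2 + 1875 * n ^ 3 - 8750/3 * n ^ 4 := by
    obtain ⟨t, rfl⟩ : ∃ t, n = 1002/5000 * t := ⟨5000/1002 * n, by ring⟩
    have t0 : 0 ≤ t := by linarith
    have t1 : t ≤ 1 := by linarith
    have b := bern_pos t0 t1
    linarith [b 0 8, b 1 7, b 2 6, b 3 5, b 4 4, b 5 3, b 6 2, b 7 1, b 8 0]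
  have h3 : 0 ≤ (k - 3) * (8 - 25 * n + 50/3 * n ^ 2) := by
    apply mul_nonneg (by linarith); nlinarith
  nlinarith [mul_pos hn (add_pos_of_pos_of_nonneg h2 h3)]

/-- The inequality behind `barrier1_alg` where the bound `kn - 25n³` is decreasing in `n`. -/
lemma poly_B {k n : ℝ} (hk : 3 ≤ k) (hk' : k ≤ 3 + 4/1000) (hn : 0 < n) (hn' : k < 75 * n ^ 2)
    (hn2 : 25 * n ^ 2 ≤ k) :
    2 * (k - 25 * n ^ 2) * (1 - 6 * n + 50/3 * n ^ 3) +
      (75 * n ^ 2 - k) * (k - 1 - 25 * n ^ 2) * (1 - 2 * n) < 0 := by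
  have h1 : n ≤ 347/1000 := by nlinarith
  have h0 : 1/5 ≤ n := by nlinarith
  have h2 : 2 * (3 - 25 * n ^ 2) * (1 - 6 * n + 50/3 * n ^ 3) +
      (75 * n ^ 2 - 3) * (3 - 1 - 25 * n ^ 2) * (1 - 2 * n) < - (1/10) := by
    obtain ⟨t, rfl⟩ : ∃ t, n = 1/5 + 147/1000 * t := ⟨1000/147 * (n - 1/5), by ring⟩
    have t0 : 0 ≤ t := by linarith
    have t1 : t ≤ 1 := by linarith
    have b := bern_pos t0 t1
    linarith [b 0 8, b 1 7, b 2 6, b 3 5, b 4 4, b 5 3, b 6 2, b 7 1, b 8 0]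
  have h3 : (k - 3) * (2 * (1 - 6 * n + 50/3 * n ^ 3) + (1 - 2 * n) * (100 * n ^ 2 - 2 - k)) ≤
      (k - 3) * 10 := by
    apply mul_le_mul_of_nonneg_left _ (by linarith)
    have e2 : n ^ 2 ≤ (347/1000) ^ 2 := pow_le_pow_left₀ hn.le h1 2
    have e3 : n ^ 3 ≤ (347/1000) ^ 3 := pow_le_pow_left₀ hn.le h1 3
    nlinarith [mul_nonneg (by linarith : 0 ≤ 1 - 2 * n) (by nlinarith : 0 ≤ (347/1000) ^ 2 - n ^ 2)]
  nlinarith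

section
variable {φ Y : ℝ → ℝ} {κ : ℝ}

lemma exp4 (y : ℝ) : Real.exp (4 * y) * Real.exp (-(4 * y)) = 1 := by
  rw [← Real.exp_add]; simp

lemma gg_le (h : Prof φ) (r : ℝ) : gg φ Y r ≤ 1 := by
  unfold gg
  have := mul_le_mul_of_nonneg_right (gEV_le h (Y r)) (Real.exp_pos (-(4 * Y r))).le
  rwa [exp4] at this

lemma pp_le (h : Prof φ) (r : ℝ) : pp φ Y r ≤ 1 := by
  unfold pp
  have := mul_le_mul_of_nonneg_right (hEV_le h (Y r)) (Real.exp_pos (-(4 * Y r))).le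
  linarith [exp4 (Y r)]

lemma gg_ge (h : Prof φ) (r : ℝ) : 1 - Cphi φ * Real.exp (-Y r) ≤ gg φ Y r := by
  unfold gg
  have := mul_le_mul_of_nonneg_right (gEV_ge h (Y r)) (Real.exp_pos (-(4 * Y r))).le
  have e := exp4 (Y r)
  linear_combination this - (1 - Cphi φ * Real.exp (-Y r)) * e

lemma pp_ge (h : Prof φ) (r : ℝ) : 1 - Cphi φ * Real.exp (-Y r) ≤ pp φ Y r := by
  unfold pp
  have := mul_le_mul_of_nonneg_right (hEV_ge h (Y r)) (Real.exp_pos (-(4 * Y r))).le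
  have e := exp4 (Y r)
  linear_combination 3 * this - (1 - Cphi φ * Real.exp (-Y r)) * e

lemma qq_pos {r : ℝ} (hr : 0 < r) : 0 < qq Y r := by unfold qq; positivity

lemma qq_deriv (hY : IsEVSteady φ κ Y) {r : ℝ} (hr : 0 < r) :
    HasDerivAt (qq Y) (qq Y r * (2 - 4 * MM φ Y r) / r) r := by
  have d := ((((hasDerivAt_id r).pow 2).const_mul (4 * Real.pi))).mul
    (((Y_deriv hY hr).const_mul 4).exp)
  refine d.congr_deriv ?_
  unfold qq
  simp only [Pi.pow_apply, id]
  field_simp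
  ring

lemma Y_anti (h : Prof φ) (hY : IsEVSteady φ κ Y) : AntitoneOn Y (Ici 0) := by
  apply antitoneOn_of_deriv_nonpos (convex_Ici 0) (Y_contOn hY)
  · intro r hr; rw [interior_Ici] at hr
    exact (Y_deriv hY hr).differentiableAt.differentiableWithinAt
  · intro r hr; rw [interior_Ici] at hr
    rw [(Y_deriv hY hr).deriv]
    have := MM_nonneg h hY hr
    have hr' : 0 < r := hr
    have : 0 ≤ MM φ Y r / r := by positivity
    linarith

lemma Y_le (h : Prof φ) (hY : IsEVSteady φ κ Y) {r : ℝ} (hr : 0 ≤ r) : Y r ≤ κ := by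
  have := Y_anti h hY (mem_Ici.2 le_rfl) (mem_Ici.2 hr) hr
  rwa [hY.2.1] at this

lemma mEV_intervalIntegrable (h : Prof φ) (hY : IsEVSteady φ κ Y) (r : ℝ) :
    IntervalIntegrable (fun s => gEV φ (Y (max 0 s)) * s ^ 2) volume 0 r :=
  (mEV_integrand_cont h hY).intervalIntegrable _ _

lemma nn_le (h : Prof φ) (hY : IsEVSteady φ κ Y) {r : ℝ} (hr : 0 < r) :
    nn φ Y r ≤ 4 * Real.pi * r ^ 2 * Real.exp (4 * κ) / 3 := by
  unfold nn
  rw [mEV_max hr.le]; unfold mEV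
  have : ∫ s in (0:ℝ)..r, gEV φ (Y (max 0 s)) * s ^ 2 ≤ ∫ s in (0:ℝ)..r, Real.exp (4 * κ) * s ^ 2 := by
    apply intervalIntegral.integral_mono_on hr.le (mEV_intervalIntegrable h hY r)
      ((by fun_prop : Continuous fun s : ℝ => Real.exp (4 * κ) * s ^ 2).intervalIntegrable _ _)
    intro s hs
    apply mul_le_mul_of_nonneg_right _ (by positivity)
    refine (gEV_le h _).trans (Real.exp_le_exp.2 ?_)
    linarith [Y_le h hY (le_max_left 0 s)]
  rw [intervalIntegral.integral_const_mul, integral_pow] at this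
  rw [div_le_iff₀ hr]
  have h2 := mul_le_mul_of_nonneg_left this (by positivity : 0 ≤ 4 * Real.pi)
  refine h2.trans (le_of_eq ?_)
  norm_num; ring

lemma nn_ge (h : Prof φ) (hY : IsEVSteady φ κ Y) {r e : ℝ} (hr : 0 < r) (he : e ≤ 1)
    (hC : Cphi φ * Real.exp (-Y r) ≤ e) : (1 - e) * qq Y r / 3 ≤ nn φ Y r := by
  unfold nn
  rw [mEV_max hr.le]; unfold mEV
  have : ∫ s in (0:ℝ)..r, ((1 - e) * Real.exp (4 * Y r)) * s ^ 2
      ≤ ∫ s in (0:ℝ)..r, gEV φ (Y (max 0 s)) * s ^ 2 := by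
    apply intervalIntegral.integral_mono_on hr.le
      ((by fun_prop : Continuous fun s : ℝ => ((1 - e) * Real.exp (4 * Y r)) * s ^ 2).intervalIntegrable _ _)
      (mEV_intervalIntegrable h hY r)
    intro s hs
    apply mul_le_mul_of_nonneg_right _ (by positivity)
    rw [max_eq_right hs.1]
    have hm : Y r ≤ Y s := Y_anti h hY (mem_Ici.2 hs.1) (mem_Ici.2 hr.le) hs.2
    have e1 : Real.exp (4 * Y r) ≤ Real.exp (4 * Y s) := Real.exp_le_exp.2 (by linarith)
    have e2 : Real.exp (-Y s) ≤ Real.exp (-Y r) := Real.exp_le_exp.2 (by linarith)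
    have e3 := mul_le_mul_of_nonneg_left e2 (Cphi_pos h).le
    have e4 : Real.exp (4 * Y s) * (1 - e) ≤ Real.exp (4 * Y s) * (1 - Cphi φ * Real.exp (-Y s)) :=
      mul_le_mul_of_nonneg_left (by linarith) (Real.exp_pos _).le
    have e5 := mul_le_mul_of_nonneg_right e1 (by linarith : 0 ≤ 1 - e)
    linarith [gEV_ge h (Y s)]
  rw [intervalIntegral.integral_const_mul, integral_pow] at this
  rw [le_div_iff₀ hr]
  have h2 := mul_le_mul_of_nonneg_left this (by positivity : 0 ≤ 4 * Real.pi)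
  refine (le_of_eq ?_).trans h2
  unfold qq
  norm_num; ring
end

section
variable {φ Y : ℝ → ℝ} {κ : ℝ}

/-- At a point where `q = kn - 25n³` with `k = 3 + 4e`, the difference `q - (kn - 25n³)` is strictly
decreasing in `log r`. -/
lemma barrier1_alg {n q p g e : ℝ} (he : 0 < e) (he' : e ≤ 1/1000) (hn : 0 < n) (hq : 0 < q)
    (hD : 0 < 1 - 2 * n) (hp : 1 - e ≤ p) (hg : 1 - e ≤ g) (hg' : g ≤ 1)
    (hq' : q = (3 + 4 * e) * n - 25 * n ^ 3) :
    q * (2 - 4 * ((n + p * q / 3) / (1 - 2 * n))) - (3 + 4 * e - 75 * n ^ 2) * (g * q - n) < 0 := by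
  set k := 3 + 4 * e with hk
  have hk3 : 3 ≤ k := by linarith
  have hk4 : k ≤ 3 + 4/1000 := by linarith
  set u := k - 25 * n ^ 2 with hu
  have hqu : q = n * u := by rw [hq', hu]; ring
  have hup : 0 < u := by
    rw [hqu] at hq; exact pos_of_mul_pos_right hq hn.le
  have hek : 3 - 25 * n ^ 2 ≤ (1 - e) * u := by
    rw [hu, hk]; nlinarith [sq_nonneg n]
  have hM : n * (2 - 25/3 * n ^ 2) ≤ n + p * q / 3 := by
    have : (1 - e) * q ≤ p * q := mul_le_mul_of_nonneg_right hp hq.le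
    rw [hqu] at this ⊢
    nlinarith
  have hM' : n * (2 - 25/3 * n ^ 2) / (1 - 2 * n) ≤ (n + p * q / 3) / (1 - 2 * n) := by gcongr
  have h1 : q * (2 - 4 * ((n + p * q / 3) / (1 - 2 * n))) ≤
      q * (2 - 4 * (n * (2 - 25/3 * n ^ 2) / (1 - 2 * n))) := by
    apply mul_le_mul_of_nonneg_left _ hq.le; linarith
  have h2 : q * (2 - 4 * (n * (2 - 25/3 * n ^ 2) / (1 - 2 * n))) =
      n * (2 * u * (1 - 6 * n + 50/3 * n ^ 3)) / (1 - 2 * n) := by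
    rw [hqu, eq_div_iff hD.ne']
    have hw := div_mul_cancel₀ (n * (2 - 25/3 * n ^ 2)) hD.ne'
    linear_combination (-4 * (n * u)) * hw
  rw [h2] at h1
  suffices hs : n * (2 * u * (1 - 6 * n + 50/3 * n ^ 3)) / (1 - 2 * n)
      < (k - 75 * n ^ 2) * (g * q - n) by linarith
  rw [div_lt_iff₀ hD]
  have h3 : (k - 75 * n ^ 2) * (g * q - n) * (1 - 2 * n)
      = n * ((k - 75 * n ^ 2) * (g * u - 1) * (1 - 2 * n)) := by rw [hqu]; ring
  rw [h3]
  apply mul_lt_mul_of_pos_left _ hn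
  rcases le_or_gt (75 * n ^ 2) k with hc | hc
  · refine (poly_A hk3 hk4 hn hc).trans_le ?_
    apply mul_le_mul_of_nonneg_right _ hD.le
    apply mul_le_mul_of_nonneg_left _ (by linarith)
    have : (1 - e) * u ≤ g * u := mul_le_mul_of_nonneg_right hg hup.le
    linarith
  · have hB := poly_B hk3 hk4 hn hc (by linarith)
    have : g * u ≤ u := by nlinarith
    have h4 : (75 * n ^ 2 - k) * (g * u - 1) * (1 - 2 * n) ≤
        (75 * n ^ 2 - k) * (k - 1 - 25 * n ^ 2) * (1 - 2 * n) := by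
      apply mul_le_mul_of_nonneg_right _ hD.le
      apply mul_le_mul_of_nonneg_left _ (by linarith)
      linarith
    rw [hu]; linarith

lemma nn_pos (h : Prof φ) (hY : IsEVSteady φ κ Y) {r e : ℝ} (hr : 0 < r) (he : e ≤ 1/1000)
    (hC : Cphi φ * Real.exp (-Y r) ≤ e) : 0 < nn φ Y r := by
  have h1 := nn_ge h hY hr (by linarith) hC
  have h2 : 0 < (1 - e) * qq Y r / 3 := by
    have := qq_pos (Y := Y) hr
    have : 0 < 1 - e := by linarith
    positivity
  linarith


lemma exists_small {r c δ : ℝ} (hr : 0 < r) (hc : 0 < c) (hδ : 0 < δ) :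
    ∃ a, 0 < a ∧ a ≤ r ∧ c * a ^ 2 ≤ δ := by
  refine ⟨min r √(δ / c), lt_min hr (Real.sqrt_pos.2 (by positivity)), min_le_left _ _, ?_⟩
  have h1 : (min r √(δ / c)) ^ 2 ≤ (√(δ / c)) ^ 2 :=
    pow_le_pow_left₀ (lt_min hr (Real.sqrt_pos.2 (by positivity))).le (min_le_right _ _) 2
  rw [Real.sq_sqrt (by positivity), le_div_iff₀ hc] at h1
  linarith

/-- The upper barrier for `q`. Near the centre `n ≥ (1-e)q/3` and `n → 0`, which gives
`q ≤ (3+4e)n - 25n³` there, and this bound is never violated later. Since `25n² > 2 + 4e` at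
`n = 71/250`, it makes `n` decreasing whenever it reaches this value. -/
lemma barrier1 (h : Prof φ) (hY : IsEVSteady φ κ Y) {e R : ℝ} (he : 0 < e) (he' : e ≤ 1/1000)
    (hC : ∀ r, 0 < r → r ≤ R → Cphi φ * Real.exp (-Y r) ≤ e) {r : ℝ} (hr : 0 < r) (hrR : r ≤ R) :
    qq Y r ≤ (3 + 4 * e) * nn φ Y r - 25 * nn φ Y r ^ 3 ∧ nn φ Y r ≤ 71/250 := by
  obtain ⟨a, ha, har, hae⟩ := exists_small hr
    (by positivity : 0 < 4 * Real.pi * Real.exp (4 * κ) / 3) (by positivity : 0 < e / 50)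
  -- at the radius `a` the cubic term is negligible against the margin `4en` of the barrier
  have hna : nn φ Y a ≤ e / 50 := (nn_le h hY ha).trans (by linarith)
  have hna0 := nn_pos h hY ha he' (hC a ha (har.trans hrR))
  have b1 : ∀ s ∈ Icc a r, qq Y s - ((3 + 4 * e) * nn φ Y s - 25 * nn φ Y s ^ 3) ≤ 0 := by
    refine barrier (f' := fun s => (qq Y s * (2 - 4 * MM φ Y s) -
      (3 + 4 * e - 75 * nn φ Y s ^ 2) * (gg φ Y s * qq Y s - nn φ Y s)) / s) ?_ ?_ ?_
    · intro s hs
      have hs0 : 0 < s := ha.trans_le hs.1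
      have dn := nn_deriv h hY hs0
      refine ((qq_deriv hY hs0).sub ((dn.const_mul (3 + 4 * e)).sub
        ((dn.pow 3).const_mul 25))).congr_deriv ?_
      rw [gg_qq]; field_simp; ring
    · have h1 := nn_ge h hY ha (by linarith) (hC a ha (har.trans hrR))
      have h2 : 0 ≤ nn φ Y a * ((1 - e) * (3 + 4 * e - 25 * nn φ Y a ^ 2) - 3) := by
        apply mul_nonneg hna0.le
        nlinarith
      have h3 : 0 < 1 - e := by linarith
      have h4 : (1 - e) * (qq Y a - ((3 + 4 * e) * nn φ Y a - 25 * nn φ Y a ^ 3)) ≤ (1 - e) * 0 := by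
        linarith
      exact le_of_mul_le_mul_left h4 h3
    · intro s hs hs'
      have hs0 : 0 < s := ha.trans_le hs.1
      have hc := hC s hs0 (hs.2.le.trans hrR)
      refine div_neg_of_neg_of_pos ?_ hs0
      rw [MM_eq]
      refine barrier1_alg he he' (nn_pos h hY hs0 he' hc) (qq_pos hs0) (DD_pos hY hs0)
        (by linarith [pp_ge (Y := Y) h s]) (by linarith [gg_ge (Y := Y) h s]) (gg_le h s) ?_
      linarith
  have b2 : ∀ s ∈ Icc a r, nn φ Y s - 71/250 ≤ 0 := by
    refine barrier (f' := fun s => (gg φ Y s * qq Y s - nn φ Y s) / s) ?_ ?_ ?_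
    · intro s hs
      have hs0 : 0 < s := ha.trans_le hs.1
      rw [← gg_qq]
      exact (nn_deriv h hY hs0).sub_const _
    · linarith
    · intro s hs hs'
      have hs0 : 0 < s := ha.trans_le hs.1
      refine div_neg_of_neg_of_pos ?_ hs0
      have h1 := b1 s ⟨hs.1, hs.2.le⟩
      have h2 : nn φ Y s = 71/250 := by linarith
      have h3 : gg φ Y s * qq Y s ≤ 1 * qq Y s :=
        mul_le_mul_of_nonneg_right (gg_le h s) (qq_pos hs0).le
      rw [h2] at h1 ⊢
      linarith
  have := b1 r ⟨har, le_rfl⟩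
  have := b2 r ⟨har, le_rfl⟩
  constructor <;> linarith

/-- The bound `-r y' ≤ 1`. -/
lemma MM_le_one (h : Prof φ) (hY : IsEVSteady φ κ Y) {e R : ℝ} (he : 0 < e) (he' : e ≤ 1/1000)
    (hC : ∀ r, 0 < r → r ≤ R → Cphi φ * Real.exp (-Y r) ≤ e) {r : ℝ} (hr : 0 < r) (hrR : r ≤ R) :
    MM φ Y r ≤ 1 := by
  obtain ⟨h1, h2⟩ := barrier1 h hY he he' hC hr hrR
  have hD : 0 < 1 - 2 * nn φ Y r := DD_pos hY hr
  have hn := nn_nonneg (Y := Y) h hr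
  rw [MM_eq, div_le_one hD]
  have h3 : pp φ Y r * qq Y r ≤ 1 * qq Y r :=
    mul_le_mul_of_nonneg_right (pp_le h r) (qq_pos hr).le
  set n := nn φ Y r
  have h4 : n * (4 + 4 * e / 3 - 25 / 3 * n ^ 2) ≤ 1 := by
    have : 4 * n - 25/3 * n ^ 3 ≤ 99/100 := by
      obtain ⟨t, ht⟩ : ∃ t, n = 71/250 * t := ⟨250/71 * n, by ring⟩
      have t0 : 0 ≤ t := by linarith
      have t1 : t ≤ 1 := by linarith
      have b := bern_pos t0 t1
      rw [ht]
      linarith [b 0 3, b 1 2, b 2 1, b 3 0]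
    nlinarith
  nlinarith

/-- At a point where `q = (1 + 12n)/1000`, the difference `(1 + 12n)/1000 - q` is strictly
decreasing in `log r`. -/
lemma barrier3_alg {n q p g : ℝ} (hn : 0 ≤ n) (hn' : n ≤ 71/250) (hp : p ≤ 1) (hg : g ≤ 1)
    (hq : q = 1/1000 * (1 + 12 * n)) :
    12/1000 * (g * q - n) - q * (2 - 4 * ((n + p * q / 3) / (1 - 2 * n))) < 0 := by
  have hD : 0 < 1 - 2 * n := by linarith
  have hq0 : 0 < q := by rw [hq]; positivity
  have h1 : (n + p * q / 3) / (1 - 2 * n) ≤ (n + q / 3) / (1 - 2 * n) := by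
    gcongr; nlinarith
  have h2 : q * (2 - 4 * ((n + q / 3) / (1 - 2 * n))) ≤
      q * (2 - 4 * ((n + p * q / 3) / (1 - 2 * n))) := by
    apply mul_le_mul_of_nonneg_left _ hq0.le; linarith
  have h3 : g * q ≤ q := by nlinarith
  suffices hs : 12/1000 * (q - n) < q * (2 - 4 * ((n + q / 3) / (1 - 2 * n))) by linarith
  have h4 : q * (2 - 4 * ((n + q / 3) / (1 - 2 * n))) =
      q * (2 - 8 * n - 4/3 * q) / (1 - 2 * n) := by
    have hD' := hD.ne'
    field_simp; ring
  rw [h4, lt_div_iff₀ hD, hq]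
  obtain ⟨t, rfl⟩ : ∃ t, n = 71/250 * t := ⟨250/71 * n, by ring⟩
  have t0 : 0 ≤ t := by linarith
  have t1 : t ≤ 1 := by linarith
  have b := bern_pos t0 t1
  linarith [b 0 3, b 1 2, b 2 1, b 3 0]

/-- The lower barrier for `q`: once `q ≥ (1 + 12n)/1000`, this remains true as long as
`n ≤ 71/250`. -/
lemma barrier3 (h : Prof φ) (hY : IsEVSteady φ κ Y) {r1 R : ℝ} (hr1 : 0 < r1)
    (hN : ∀ r, 0 < r → r ≤ R → nn φ Y r ≤ 71/250)
    (h0 : 1/1000 * (1 + 12 * nn φ Y r1) ≤ qq Y r1) {r : ℝ} (hr : r1 ≤ r) (hrR : r ≤ R) :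
    1/1000 ≤ qq Y r := by
  have b : ∀ s ∈ Icc r1 R, 1/1000 * (1 + 12 * nn φ Y s) - qq Y s ≤ 0 := by
    refine barrier (f' := fun s => (12/1000 * (gg φ Y s * qq Y s - nn φ Y s)
      - qq Y s * (2 - 4 * MM φ Y s)) / s) ?_ (by linarith) ?_
    · intro s hs
      have hs0 : 0 < s := hr1.trans_le hs.1
      refine ((((nn_deriv h hY hs0).const_mul 12).const_add 1).const_mul (1/1000)
        |>.sub (qq_deriv hY hs0)).congr_deriv ?_
      rw [gg_qq]; field_simp
    · intro s hs hs'
      have hs0 : 0 < s := hr1.trans_le hs.1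
      refine div_neg_of_neg_of_pos ?_ hs0
      rw [MM_eq]
      exact barrier3_alg (nn_nonneg h hs0) (hN s hs0 hs.2.le) (pp_le h s) (gg_le h s) (by linarith)
  have := b r ⟨hr, hrR⟩
  have := nn_nonneg (Y := Y) h (hr1.trans_le hr)
  linarith
end

/-! ### The layer on which the perturbation lives -/

/-- The inner radius of the layer, defined by `4πr²e^{4κ} = 1/100`. -/
def rin (κ : ℝ) : ℝ := Real.exp (-2 * κ) / √(400 * Real.pi)

lemma rin_pos (κ : ℝ) : 0 < rin κ := by unfold rin; positivity

lemma rin_sq (κ : ℝ) : 4 * Real.pi * rin κ ^ 2 * Real.exp (4 * κ) = 1/100 := by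
  unfold rin
  rw [div_pow, Real.sq_sqrt (by positivity), ← Real.exp_nat_mul]
  have : Real.exp (((2:ℕ):ℝ) * (-2 * κ)) * Real.exp (4 * κ) = 1 := by
    rw [← Real.exp_add, ← Real.exp_zero]; congr 1; push_cast; ring
  generalize Real.exp (((2:ℕ):ℝ) * (-2 * κ)) = A at *
  generalize Real.exp (4 * κ) = B at *
  field_simp
  linear_combination 400 * this

section
variable {φ Y : ℝ → ℝ} {κ : ℝ}

lemma XX_le {r : ℝ} (hr : 0 < r) (hr1 : r ≤ rin κ) :
    4 * Real.pi * r ^ 2 * Real.exp (4 * κ) ≤ 1/100 := by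
  rw [← rin_sq κ]; gcongr

lemma MM_start (h : Prof φ) (hY : IsEVSteady φ κ Y) {r : ℝ} (hr : 0 < r) (hr1 : r ≤ rin κ) :
    MM φ Y r ≤ 4 * Real.pi * r ^ 2 * Real.exp (4 * κ) := by
  have hX := XX_le hr hr1
  have hn := nn_le h hY hr
  have hX0 : 0 ≤ 4 * Real.pi * r ^ 2 * Real.exp (4 * κ) := by positivity
  have hh : 4 * Real.pi * r ^ 2 * hEV φ (Y r) ≤ 4 * Real.pi * r ^ 2 * (Real.exp (4 * κ) / 3) := by
    gcongr
    refine (hEV_le h _).trans ?_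
    have := Y_le h hY hr.le
    gcongr
  have hD : 0 < 1 - 2 * nn φ Y r := DD_pos hY hr
  unfold MM DD
  rw [div_le_iff₀ hD]
  set X := 4 * Real.pi * r ^ 2 * Real.exp (4 * κ)
  nlinarith

/-- The redshift has hardly changed between the centre and the inner radius, since
`-r y' ≤ 4πr²e^{4κ}` there. -/
lemma Y_start (h : Prof φ) (hY : IsEVSteady φ κ Y) : κ - 1/200 ≤ Y (rin κ) := by
  have hm : MonotoneOn (fun r => Y r + 2 * Real.pi * Real.exp (4 * κ) * r ^ 2) (Icc 0 (rin κ)) := by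
    have hd : ∀ r, 0 < r → HasDerivAt (fun r => Y r + 2 * Real.pi * Real.exp (4 * κ) * r ^ 2)
        (-(MM φ Y r / r) + 2 * Real.pi * Real.exp (4 * κ) * (2 * r)) r := fun r hr => by
      have := (Y_deriv hY hr).add (((hasDerivAt_id r).pow 2).const_mul (2 * Real.pi * Real.exp (4 * κ)))
      refine this.congr_deriv ?_
      simp
    apply monotoneOn_of_deriv_nonneg (convex_Icc _ _)
    · exact ((Y_contOn hY).mono Icc_subset_Ici_self).add (by fun_prop)
    · intro r hr; rw [interior_Icc] at hr
      exact (hd r hr.1).differentiableAt.differentiableWithinAt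
    · intro r hr; rw [interior_Icc] at hr
      rw [(hd r hr.1).deriv]
      have h1 := MM_start h hY hr.1 hr.2.le
      have h2 : MM φ Y r / r ≤ 2 * Real.pi * Real.exp (4 * κ) * (2 * r) := by
        rw [div_le_iff₀ hr.1]; linarith
      linarith
  have := hm (left_mem_Icc.2 (rin_pos κ).le) (right_mem_Icc.2 (rin_pos κ).le) (rin_pos κ).le
  simp only [hY.2.1] at this
  have := rin_sq κ
  linarith

lemma qq_start (h : Prof φ) (hY : IsEVSteady φ κ Y) :
    1/1000 * (1 + 12 * nn φ Y (rin κ)) ≤ qq Y (rin κ) := by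
  have h1 := nn_le h hY (rin_pos κ)
  rw [rin_sq] at h1
  have h2 : Real.exp (4 * κ) * (98/100) ≤ Real.exp (4 * Y (rin κ)) := by
    have h3 : Real.exp (4 * κ) * Real.exp (-(1/50)) ≤ Real.exp (4 * Y (rin κ)) := by
      rw [← Real.exp_add]; apply Real.exp_le_exp.2; linarith [Y_start h hY]
    have h4 := Real.add_one_le_exp (-(1/50) : ℝ)
    have h5 := mul_le_mul_of_nonneg_left h4 (Real.exp_pos (4 * κ)).le
    linarith
  have h6 := mul_le_mul_of_nonneg_left h2 (by positivity : 0 ≤ 4 * Real.pi * rin κ ^ 2)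
  have h7 := rin_sq κ
  unfold qq
  linarith

/-- The redshift decreases by at most `2L + 1` up to the end of the layer. -/
lemma Y_fence (h : Prof φ) (hY : IsEVSteady φ κ Y) {e L : ℝ} (he : 0 < e) (he' : e ≤ 1/1000)
    (hC : Cphi φ * Real.exp (-(κ - 1 - 2 * L)) ≤ e) :
    ∀ r ∈ Icc (rin κ) (rin κ * Real.exp L), κ - 1 - 2 * L ≤ Y r := by
  have hr1 := rin_pos κ
  have hlog : ∀ r ∈ Icc (rin κ) (rin κ * Real.exp L), Real.log (r / rin κ) ≤ L := fun r hr => by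
    have hr0 : 0 < r := hr1.trans_le hr.1
    rw [Real.log_le_iff_le_exp (by positivity), div_le_iff₀ hr1]
    linarith [hr.2]
  -- `-r y' ≤ 1` is available only while `y` is large, so the bound on `y` is itself a barrier
  have b : ∀ r ∈ Icc (rin κ) (rin κ * Real.exp L),
      κ - 1 - 2 * Real.log (r / rin κ) - Y r ≤ 0 := by
    refine barrier (f' := fun r => (-2 + MM φ Y r) / r) ?_ ?_ ?_
    · intro r hr
      have hr0 : 0 < r := hr1.trans_le hr.1
      have d1 := ((hasDerivAt_id r).div_const (rin κ)).log (by simp; exact ⟨hr0.ne', hr1.ne'⟩)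
      refine (((d1.const_mul 2).const_sub (κ - 1)).sub (Y_deriv hY hr0)).congr_deriv ?_
      simp only [id]; field_simp; ring
    · rw [div_self hr1.ne', Real.log_one]
      linarith [Y_start h hY]
    · intro r hr hr'
      have hr0 : 0 < r := hr1.trans_le hr.1
      have hl := hlog r ⟨hr.1, hr.2.le⟩
      have hM := MM_le_one h hY (R := r) he he' (fun s hs hsr => by
        have hsY : Y r ≤ Y s := Y_anti h hY (mem_Ici.2 hs.le) (mem_Ici.2 hr0.le) hsr
        refine le_trans ?_ hC
        have := (Cphi_pos h).le
        gcongr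
        linarith) hr0 le_rfl
      exact div_neg_of_neg_of_pos (by linarith) hr0
  intro r hr
  linarith [b r hr, hlog r hr]

/-- The scale-invariant bounds on the transition layer. -/
lemma layer (h : Prof φ) (hY : IsEVSteady φ κ Y) {e L : ℝ} (hL : 0 ≤ L) (he : 0 < e) (he' : e ≤ 1/1000)
    (hC : Cphi φ * Real.exp (-(κ - 1 - 2 * L)) ≤ e) :
    ∀ r ∈ Icc (rin κ) (rin κ * Real.exp L), Cphi φ * Real.exp (-Y r) ≤ e ∧ κ - 1 - 2 * L ≤ Y r ∧
      nn φ Y r ≤ 71/250 ∧ qq Y r ≤ 3 * nn φ Y r - 25 * nn φ Y r ^ 3 + 1/200 ∧ |VV φ Y r| ≤ 1001 := by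
  intro r hr
  have hr1 := rin_pos κ
  have hr0 : 0 < r := hr1.trans_le hr.1
  have hR : rin κ ≤ rin κ * Real.exp L := by
    have := Real.one_le_exp hL
    nlinarith
  have hYl := Y_fence h hY he he' hC
  have hCe : ∀ s, 0 < s → s ≤ rin κ * Real.exp L → Cphi φ * Real.exp (-Y s) ≤ e := fun s hs hsR => by
    have hsY : Y (rin κ * Real.exp L) ≤ Y s :=
      Y_anti h hY (mem_Ici.2 hs.le) (mem_Ici.2 (by positivity)) hsR
    have := hYl _ (right_mem_Icc.2 hR)
    refine le_trans ?_ hC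
    have := (Cphi_pos h).le
    gcongr
    linarith
  have hb := fun s hs hsR => barrier1 h hY he he' hCe (r := s) hs hsR
  obtain ⟨h1, h2⟩ := hb r hr0 hr.2
  have hn0 := nn_nonneg (Y := Y) h hr0
  have h3 := barrier3 h hY hr1 (fun s hs hsR => (hb s hs hsR).2) (qq_start h hY) hr.1 hr.2
  refine ⟨hCe r hr0 hr.2, hYl r hr, h2, by nlinarith, ?_⟩
  have hV : VV φ Y r = -Real.log (qq Y r) + 7/2 * nn φ Y r := by
    unfold VV qq
    rw [Real.log_mul (x := 4 * Real.pi * r ^ 2) (by positivity) (by positivity),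
      Real.log_mul (x := 4 * Real.pi) (by positivity) (by positivity),
      Real.log_exp, Real.log_pow]; push_cast; ring
  have hq1 : qq Y r ≤ 1 := by nlinarith [pow_nonneg hn0 3]
  have hl1 : Real.log (qq Y r) ≤ 0 := Real.log_nonpos (by linarith) hq1
  have hl2 : -1000 ≤ Real.log (qq Y r) := by
    have h4 := Real.one_sub_inv_le_log_of_pos (x := qq Y r) (by linarith)
    have h5 : (qq Y r)⁻¹ ≤ 1000 := by
      rw [inv_le_comm₀ (by linarith) (by norm_num)]; linarith
    linarith
  rw [hV, abs_le]
  constructor <;> linarith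
end

/-! ### The radial integral -/

section
variable {φ Y : ℝ → ℝ} {κ L r1 : ℝ}

lemma chi_cont (hr1 : 0 < r1) : ContinuousOn (chi L r1) (Ioi 0) := fun _ hr =>
  (chi_deriv hr1 hr).continuousAt.continuousWithinAt

lemma chid_cont (hr1 : 0 < r1) : ContinuousOn (chid L r1) (Ioi 0) := by
  unfold chid
  refine ContinuousOn.div_const (bump_deriv_cont.comp_continuousOn ?_) L
  refine ContinuousOn.div_const (ContinuousOn.log (by fun_prop) ?_) L
  intro r hr
  have : 0 < r := hr
  positivity

lemma Icc_sub (hr1 : 0 < r1) (b : ℝ) : Icc r1 b ⊆ Ioi (0:ℝ) := fun _ hr => hr1.trans_le hr.1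

/-- The cutoff equals `1` on the middle half of the layer in the variable `log r`. -/
lemma chi_mass (hL : 0 < L) (hr1 : 0 < r1) :
    L / 2 ≤ ∫ r in r1..(r1 * Real.exp L), chi L r1 r ^ 2 / r := by
  have m1 : r1 ≤ r1 * Real.exp (L / 4) := by
    have := Real.one_le_exp (by positivity : 0 ≤ L / 4); nlinarith
  have m2 : r1 * Real.exp (L / 4) ≤ r1 * Real.exp (3 * L / 4) := by gcongr; linarith
  have m3 : r1 * Real.exp (3 * L / 4) ≤ r1 * Real.exp L := by gcongr; linarith
  have hi : IntervalIntegrable (fun r => chi L r1 r ^ 2 / r) volume r1 (r1 * Real.exp L) := by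
    apply ContinuousOn.intervalIntegrable_of_Icc (m1.trans (m2.trans m3))
    exact (((chi_cont hr1).mono (Icc_sub hr1 _)).pow 2).div continuousOn_id
      fun r hr => (hr1.trans_le hr.1).ne'
  refine le_trans (le_of_eq ?_) (intervalIntegral.integral_mono_interval m1 m2 m3 ?_ hi)
  · have : ∀ r ∈ uIcc (r1 * Real.exp (L / 4)) (r1 * Real.exp (3 * L / 4)),
        chi L r1 r ^ 2 / r = 1 / r := fun r hr => by
      rw [uIcc_of_le m2] at hr
      have hr0 : 0 < r := hr1.trans_le (m1.trans hr.1)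
      have e1 : L / 4 ≤ Real.log (r / r1) := by
        rw [Real.le_log_iff_exp_le (by positivity), le_div_iff₀ hr1]; linarith [hr.1]
      have e2 : Real.log (r / r1) ≤ 3 * L / 4 := by
        rw [Real.log_le_iff_le_exp (by positivity), div_le_iff₀ hr1]; linarith [hr.2]
      have : chi L r1 r = 1 := by
        unfold chi
        apply bump_one
        · rw [le_div_iff₀ hL]; linarith
        · rw [div_le_iff₀ hL]; linarith
      rw [this]; norm_num
    rw [intervalIntegral.integral_congr this, integral_one_div_of_pos (by positivity) (by positivity),
      mul_div_mul_left _ _ hr1.ne', ← Real.exp_sub, Real.log_exp]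
    ring
  · filter_upwards [ae_restrict_mem measurableSet_Ioc] with r hr
    have : 0 < r := hr1.trans hr.1
    simp only [Pi.zero_apply]; positivity

/-- The integrand is the derivative of `V χ²`, which vanishes at both ends of the layer. -/
lemma U_int (h : Prof φ) (hY : IsEVSteady φ κ Y) (hL : 0 < L) (hr1 : 0 < r1) :
    IntervalIntegrable (fun r => ((-(2 - 4 * MM φ Y r) + 7/2 * (gg φ Y r * qq Y r - nn φ Y r))
      * chi L r1 r ^ 2 + VV φ Y r * (2 * chi L r1 r * chid L r1 r)) / r) volume r1 (r1 * Real.exp L) ∧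
    ∫ r in r1..(r1 * Real.exp L), ((-(2 - 4 * MM φ Y r) + 7/2 * (gg φ Y r * qq Y r - nn φ Y r))
      * chi L r1 r ^ 2 + VV φ Y r * (2 * chi L r1 r * chid L r1 r)) / r = 0 := by
  have m : r1 ≤ r1 * Real.exp L := by
    have := Real.one_le_exp hL.le; nlinarith
  have hi : IntervalIntegrable (fun r => ((-(2 - 4 * MM φ Y r) + 7/2 * (gg φ Y r * qq Y r - nn φ Y r))
      * chi L r1 r ^ 2 + VV φ Y r * (2 * chi L r1 r * chid L r1 r)) / r) volume r1
      (r1 * Real.exp L) := by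
    apply ContinuousOn.intervalIntegrable_of_Icc m
    refine ContinuousOn.mono ?_ (Icc_sub hr1 (r1 * Real.exp L))
    have c1 := MM_cont h hY
    have c2 := nn_cont h hY
    have c3 := Yc hY
    have c4 : ContinuousOn (gg φ Y) (Ioi 0) := by
      have := (gEV_cont h).comp_continuousOn c3
      unfold gg; fun_prop
    have c5 : ContinuousOn (qq Y) (Ioi 0) := by unfold qq; fun_prop
    have c6 : ContinuousOn (VV φ Y) (Ioi 0) := by
      have : ContinuousOn Real.log (Ioi 0) := Real.continuousOn_log.mono fun r hr => ne_of_gt hr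
      unfold VV; fun_prop
    have c7 := chi_cont (L := L) hr1
    have c8 := chid_cont (L := L) hr1
    refine ContinuousOn.div ?_ continuousOn_id fun r hr => ne_of_gt hr
    fun_prop
  refine ⟨hi, ?_⟩
  rw [intervalIntegral.integral_eq_sub_of_hasDerivAt (f := fun r => VV φ Y r * chi L r1 r ^ 2) ?_ hi]
  · have z1 : chi L r1 r1 = 0 := by
      unfold chi; rw [div_self hr1.ne']; simp [bump_zero]
    have z2 : chi L r1 (r1 * Real.exp L) = 0 := by
      unfold chi; rw [mul_div_cancel_left₀ _ hr1.ne', Real.log_exp, div_self hL.ne']; simp [bump_zero]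
    rw [z1, z2]; simp
  · intro r hr
    rw [uIcc_of_le m] at hr
    exact U_deriv h hY hr1 (hr1.trans_le hr.1)

/-- The gain from the negative coefficient of `χ²` is proportional to the logarithmic length `L`
of the layer, the cost of the cutoff to `1/L`. -/
lemma radial_neg (h : Prof φ) (hY : IsEVSteady φ κ Y) (hL : 0 < L) (hr1 : 0 < r1) {ε c K B VB : ℝ}
    (hε : 0 < ε) (hB : ∀ t, |deriv bump t| ≤ B) (hc : 0 ≤ c) (hK : K = K1 ε VB)
    (hV : ∀ r ∈ Icc r1 (r1 * Real.exp L), |VV φ Y r| ≤ VB)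
    (hPhi : ∀ r ∈ Icc r1 (r1 * Real.exp L), Phi (pp φ Y r) (k2 φ (Y r) / 4) (gg φ Y r)
        ((1 + ε⁻¹) * (4 * Real.pi * φ 1 * Real.exp (-2 * Y r))) ε (nn φ Y r) (qq Y r) ≤ -c) :
    ∫ r in Ioi (0:ℝ), (W1 φ Y (aT Y L r1) (raT φ Y L r1) ε r - W2 φ Y (aT Y L r1) r) ≤
      4 * Real.pi * (K * B ^ 2 / L - c * (L / 2)) := by
  have m : r1 ≤ r1 * Real.exp L := by
    have := Real.one_le_exp hL.le; nlinarith
  have hz : ∀ r, 0 < r → r ∉ Icc r1 (r1 * Real.exp L) → aT Y L r1 r = 0 ∧ raT φ Y L r1 r = 0 := by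
    intro r hr hr'
    obtain ⟨a, b⟩ := chi_zero_out hL hr1 hr hr'
    unfold aT raT
    rw [a, b]; constructor <;> ring
  have ha : ContinuousOn (aT Y L r1) (Ioi 0) := fun r hr =>
    (aT_deriv hY hr1 hr).continuousAt.continuousWithinAt
  have hI := (W1_integrable (ε := ε) h hY hr1 ha (raT_cont h hY hr1) hz).sub
    (W2_integrable h hY hr1 ha fun r a b => (hz r a b).1)
  set I := fun r => W1 φ Y (aT Y L r1) (raT φ Y L r1) ε r - W2 φ Y (aT Y L r1) r with hIdef
  have hred : ∫ r in Ioi (0:ℝ), I r = ∫ r in r1..(r1 * Real.exp L), I r := by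
    rw [intervalIntegral.integral_of_le m, ← integral_Icc_eq_integral_Ioc]
    apply setIntegral_eq_of_subset_of_forall_sdiff_eq_zero measurableSet_Ioi (Icc_sub hr1 _)
    rintro r ⟨hr, hr'⟩
    obtain ⟨a, b⟩ := hz r hr hr'
    simp only [hIdef, W1, W2, a, b, Fq]; ring
  have hIi : IntervalIntegrable I volume r1 (r1 * Real.exp L) := by
    rw [intervalIntegrable_iff_integrableOn_Icc_of_le m]
    exact IntegrableOn.mono_set hI (Icc_sub hr1 _)
  obtain ⟨hUi, hU0⟩ := U_int h hY hL hr1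
  have hXi : IntervalIntegrable (fun r => chi L r1 r ^ 2 / r) volume r1 (r1 * Real.exp L) := by
    apply ContinuousOn.intervalIntegrable_of_Icc m
    exact (((chi_cont hr1).mono (Icc_sub hr1 _)).pow 2).div continuousOn_id
      fun r hr => (hr1.trans_le hr.1).ne'
  have hOi : IntervalIntegrable (fun r : ℝ => 1 / r) volume r1 (r1 * Real.exp L) := by
    apply ContinuousOn.intervalIntegrable_of_Icc m
    exact continuousOn_const.div continuousOn_id fun r hr => (hr1.trans_le hr.1).ne'
  have hKp : 0 ≤ K := by rw [hK]; unfold K1; positivity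
  rw [hred]
  have hmono := intervalIntegral.integral_mono_on m hIi
    (((hOi.const_mul (4 * Real.pi * (K * (B / L) ^ 2))).sub (hXi.const_mul (4 * Real.pi * c))).sub
      (hUi.const_mul (4 * Real.pi))) (fun r hr => by
      have hr0 : 0 < r := hr1.trans_le hr.1
      have w := W_le (L := L) (r1 := r1) (Y := Y) h hε hr0 (hV r hr)
      have p := hPhi r hr
      have q : chid L r1 r ^ 2 ≤ (B / L) ^ 2 := by
        rw [← sq_abs]
        apply pow_le_pow_left₀ (abs_nonneg _)
        unfold chid
        rw [abs_div, abs_of_pos hL]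
        have := hB (Real.log (r / r1) / L)
        gcongr
      rw [← hK] at w
      have p' := mul_le_mul_of_nonneg_left p (sq_nonneg (chi L r1 r))
      have q' := mul_le_mul_of_nonneg_left q hKp
      have s := mul_le_mul_of_nonneg_left (add_le_add p' q') (by positivity : 0 ≤ 4 * Real.pi / r)
      refine w.trans ?_
      refine (sub_le_sub_right s _).trans (le_of_eq ?_)
      ring)
  refine hmono.trans ?_
  rw [intervalIntegral.integral_sub ((hOi.const_mul _).sub (hXi.const_mul _)) (hUi.const_mul _),
    intervalIntegral.integral_sub (hOi.const_mul _) (hXi.const_mul _),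
    intervalIntegral.integral_const_mul, intervalIntegral.integral_const_mul,
    intervalIntegral.integral_const_mul, hU0, integral_one_div_of_pos hr1 (by positivity),
    mul_div_cancel_left₀ _ hr1.ne', Real.log_exp]
  have hm := mul_le_mul_of_nonneg_left (chi_mass hL hr1) (by positivity : 0 ≤ 4 * Real.pi * c)
  have e : 4 * Real.pi * (K * (B / L) ^ 2) * L = 4 * Real.pi * (K * B ^ 2 / L) := by
    field_simp
  rw [e]
  linarith
end

/-! ### Choice of the layer and of the redshift -/

lemma exists_depth (φ : ℝ → ℝ) {e τ b : ℝ} (he : 0 < e) (hτ : 0 < τ) :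
    ∃ y0 : ℝ, ∀ y, y0 ≤ y → Cphi φ * Real.exp (-y) ≤ e ∧ b * Real.exp (-2 * y) ≤ τ := by
  have t1 : Tendsto (fun y : ℝ => Real.exp (-y)) atTop (𝓝 0) := Real.tendsto_exp_neg_atTop_nhds_zero
  have t2 : Tendsto (fun y : ℝ => Cphi φ * Real.exp (-y)) atTop (𝓝 0) := by
    simpa using t1.const_mul (Cphi φ)
  have t3 : Tendsto (fun y : ℝ => b * Real.exp (-2 * y)) atTop (𝓝 0) := by
    have := (t1.pow 2).const_mul b
    refine (this.congr fun y => ?_).trans (by simp)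
    rw [← Real.exp_nat_mul]; congr 2; push_cast; ring
  obtain ⟨y0, h0⟩ := ((t2.eventually_lt_const he).and (t3.eventually_lt_const hτ)).exists_forall_of_atTop
  exact ⟨y0, fun y hy => ⟨(h0 y hy).1.le, (h0 y hy).2.le⟩⟩

/-- The parameters are fixed in the order: Young parameter and admissible deviation `τ`, then `L`,
then `κ₀`. -/
theorem core (φ : ℝ → ℝ) (h : Prof φ) : ∃ κ₀ : ℝ, 0 < κ₀ ∧ ∀ κ, κ₀ < κ → ∃ L : ℝ, 0 < L ∧
    ∀ Y : ℝ → ℝ, IsEVSteady φ κ Y → ∀ yinf : ℝ,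
    Aform (fun r => yinf - Y r) (lamOf φ Y) (Real.exp yinf) φ
      (fh (fun r => yinf - Y r) (lamOf φ Y) (Real.exp yinf) φ (hT (aT Y L (rin κ))))
      (fun r => lamh (fun r => yinf - Y r) (lamOf φ Y) (Real.exp yinf) φ
        (hT (aT Y L (rin κ))) (r • e1)) < 0 := by
  obtain ⟨τ, hτ, hτ1, hPhi⟩ := Phi_tube
  obtain ⟨B, hB0, hB⟩ := bump_deriv_bdd
  obtain ⟨K, hK⟩ : ∃ K, K = K1 τ 1001 := ⟨_, rfl⟩
  have hK0 : 0 ≤ K := by rw [hK]; unfold K1; positivity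
  -- this length makes `K B² / L - L / 4000` negative, which is the bound of `radial_neg` for
  -- `c = 1/2000`
  obtain ⟨L, hLdef⟩ : ∃ L, L = 1 + 4000 * (K * B ^ 2) := ⟨_, rfl⟩
  have hKB : 0 ≤ K * B ^ 2 := by positivity
  have hL : 0 < L := by linarith
  have hfin : K * B ^ 2 / L - 1/2000 * (L / 2) < 0 := by
    rw [sub_neg, div_lt_iff₀ hL]; nlinarith
  obtain ⟨y0, hy0⟩ := exists_depth φ (e := min τ (1/1000)) (τ := τ)
    (b := (1 + τ⁻¹) * (4 * Real.pi * φ 1)) (by positivity) hτ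
  have hb0 : 0 ≤ (1 + τ⁻¹) * (4 * Real.pi * φ 1) := by
    have := h.nonneg 1
    positivity
  refine ⟨max y0 0 + 1 + 2 * L, by positivity, fun κ hκ => ⟨L, hL, fun Y hY yinf => ?_⟩⟩
  have hκ0 : y0 ≤ κ - 1 - 2 * L := by linarith [le_max_left y0 0]
  have hr1 := rin_pos κ
  have hlay := layer h hY hL.le (by positivity : 0 < min τ (1/1000)) (min_le_right _ _)
    (hy0 _ hκ0).1
  have hz : ∀ r, 0 < r → r ∉ Icc (rin κ) (rin κ * Real.exp L) →
      aT Y L (rin κ) r = 0 ∧ raT φ Y L (rin κ) r = 0 := by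
    intro r hr hr'
    obtain ⟨a, b⟩ := chi_zero_out hL hr1 hr hr'
    unfold aT raT
    rw [a, b]; constructor <;> ring
  refine (Aform_le (ε := τ) h hY hτ hr1 (fun r hr => aT_deriv hY hr1 hr) (raT_cont h hY hr1) hz).trans_lt ?_
  have hneg := radial_neg (c := 1/2000) h hY hL hr1 hτ hB (by norm_num) hK
    (fun r hr => (hlay r hr).2.2.2.2) (fun r hr => by
      obtain ⟨h1, h2, h3, h4, -⟩ := hlay r hr
      have hr0 : 0 < r := hr1.trans_le hr.1
      have h1' := h1.trans (min_le_left τ (1/1000))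
      have hd := (hy0 _ (hκ0.trans h2)).2
      apply hPhi
      · rw [abs_le]; constructor <;> linarith [pp_ge (Y := Y) h r, pp_le (Y := Y) h r]
      · rw [abs_le]; constructor <;> linarith [k2_le h (Y r), k2_ge' h (Y r)]
      · rw [abs_le]; constructor <;> linarith [gg_ge (Y := Y) h r, gg_le (Y := Y) h r]
      · rw [← mul_assoc, abs_of_nonneg (mul_nonneg hb0 (Real.exp_pos _).le)]; exact hd
      · rw [abs_of_pos hτ]
      · exact nn_nonneg h hr0
      · exact h3
      · exact (qq_pos hr0).le
      · exact h4)
  have hneg2 := mul_lt_mul_of_pos_left hfin (by positivity : 0 < 4 * Real.pi)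
  have : ∫ r in Ioi (0:ℝ), (W1 φ Y (aT Y L (rin κ)) (raT φ Y L (rin κ)) τ r
      - W2 φ Y (aT Y L (rin κ)) r) < 0 := by linarith
  exact mul_neg_of_pos_of_neg (by positivity) this

/-- **A negative energy direction for the Einstein–Vlasov system with large central
redshift.**  For `κ` sufficiently large there is a spherically symmetric, odd-in-`v`
function `h ∈ C²(ℝ⁶)` such that the second variation of the energy–Casimir functional
is negative in the linearly dynamically accessible direction `f_h`:
`A(f_h, f_h) < 0`. -/
theorem stmt_19 (φ : ℝ → ℝ) (hφcont : Continuous φ)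
    (hφC2 : ContDiffOn ℝ 2 φ (Ioi 0))
    (hφ0 : ∀ η : ℝ, η ≤ 0 → φ η = 0) (hφpos : ∀ η : ℝ, 0 < η → 0 < φ η)
    (hφ' : ∀ η : ℝ, 0 < η → 0 < deriv φ η)
    (C η₀ k : ℝ) (hC : 0 < C) (hη₀ : 0 < η₀) (hk : 0 < k) (hk' : k < 3 / 2)
    (hgrowth : ∀ η : ℝ, 0 < η → η < η₀ → C * η ^ k ≤ φ η)
    (hnorm : 4 * Real.pi * ∫ η in (0 : ℝ)..1, φ η * (1 - η) ^ 3 = 1) :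
    ∃ κ₀ : ℝ, 0 < κ₀ ∧
      ∀ κ : ℝ, κ₀ < κ →
        ∀ Y : ℝ → ℝ, IsEVSteady φ κ Y →
        ∀ yinf : ℝ, Tendsto Y atTop (nhds yinf) →
        ∀ μf lamf : ℝ → ℝ, ∀ E0 : ℝ,
          μf = (fun r => yinf - Y r) →
          lamf = (fun r => -(1 / 2) * Real.log (1 - 2 * mEV φ Y r / r)) →
          E0 = Real.exp yinf →
        ∃ h : V3 × V3 → ℝ, ContDiff ℝ 2 h ∧ SphSym h ∧
          (∀ x v : V3, h (x, -v) = -h (x, v)) ∧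
          Aform μf lamf E0 φ (fh μf lamf E0 φ h)
            (fun r => lamh μf lamf E0 φ h (r • e1)) < 0 := by
  obtain ⟨κ₀, hκ₀, H⟩ := core φ ⟨hφcont, hφC2, hφ0, hφpos, hφ', hnorm⟩
  refine ⟨κ₀, hκ₀, fun κ hκ Y hY yinf _ μf lamf E0 hμ hlam hE => ?_⟩
  subst hμ hlam hE
  obtain ⟨L, hL, HL⟩ := H κ hκ
  exact ⟨hT (aT Y L (rin κ)), hT_smooth hY hL (rin_pos κ), hT_sph _, hT_odd _, HL Y hY yinf⟩
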